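/- arXiv:1502.03365 — 2 statements merged into one kernel-verified Lean document; each statement's English description precedes it below -/
import Mathlib

section
/- Let ℙ_n denote the distribution of the observed labeled graph (G, L) under the labeled stochastic block model 𝒢(n, a/n, b/n, μ, ν), and let ℙ'_n denote the distribution of the labeled Erdős–Rényi graph 𝒢(n, (a+b)/2). If τ > 1, then ℙ_n and ℙ'_n are asymptotically orthogonal: there exists a sequence of events A_n (measurable sets of labeled graphs on n vertices) such that ℙ_n(A_n) → 1 and ℙ'_n(A_n) → 0 as n → ∞. -/
open Finset Filter Real

namespace LSBM

/-- Ordered pairs `u < v` of vertices. -/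
abbrev Pairs (n : ℕ) := {p : Fin n × Fin n // p.1 < p.2}

/-- A labeled-graph configuration: each pair `u < v` carries `none` (no edge)
or `some ℓ` (an edge with label `ℓ`). -/
abbrev EdgeConf (n : ℕ) (L : Type*) := Pairs n → Option L

variable {L : Type*}

/-- The label (if any) on the edge between `u` and `v`. -/
def getLabel {n : ℕ} (E : EdgeConf n L) (u v : Fin n) : Option L :=
  if h : u < v then E ⟨(u, v), h⟩ else if h' : v < u then E ⟨(v, u), h'⟩ else none

/-- Per-pair mass under the labeled stochastic block model. -/
noncomputable def sbmPairMass (n : ℕ) (a b : ℝ) (μ ν : L → ℝ) (same : Bool) : Option L → ℝ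
  | none => if same then 1 - a / n else 1 - b / n
  | some ℓ => if same then (a / n) * μ ℓ else (b / n) * ν ℓ

/-- Joint mass of a (type assignment, labeled graph) outcome under the labeled SBM. -/
noncomputable def sbmMass (n : ℕ) (a b : ℝ) (μ ν : L → ℝ)
    (x : (Fin n → Bool) × EdgeConf n L) : ℝ :=
  (1 / 2 : ℝ) ^ n *
    ∏ p : Pairs n, sbmPairMass n a b μ ν (x.1 p.1.1 == x.1 p.1.2) (x.2 p)

/-- Probability of an event under the labeled SBM (joint in types and graph). -/
noncomputable def sbmProb [Fintype L] (n : ℕ) (a b : ℝ) (μ ν : L → ℝ)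
    (A : Set ((Fin n → Bool) × EdgeConf n L)) : ℝ :=
  ∑ x : (Fin n → Bool) × EdgeConf n L, A.indicator (sbmMass n a b μ ν) x

/-- Probability of a labeled-graph event under the labeled SBM (marginal over types). -/
noncomputable def sbmGraphProb [Fintype L] (n : ℕ) (a b : ℝ) (μ ν : L → ℝ)
    (A : Set (EdgeConf n L)) : ℝ :=
  sbmProb n a b μ ν {x | x.2 ∈ A}

/-- Conditional (given the type assignment `σ`) probability of a labeled-graph event
under the labeled SBM. -/
noncomputable def sbmCondProb [Fintype L] (n : ℕ) (a b : ℝ) (μ ν : L → ℝ)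
    (σ : Fin n → Bool) (A : Set (EdgeConf n L)) : ℝ :=
  ∑ E : EdgeConf n L, A.indicator
    (fun E' => ∏ p : Pairs n, sbmPairMass n a b μ ν (σ p.1.1 == σ p.1.2) (E' p)) E

/-- Conditional (given `σ`) expectation of a function of the labeled graph. -/
noncomputable def sbmCondExp [Fintype L] (n : ℕ) (a b : ℝ) (μ ν : L → ℝ)
    (σ : Fin n → Bool) (f : EdgeConf n L → ℝ) : ℝ :=
  ∑ E : EdgeConf n L,
    (∏ p : Pairs n, sbmPairMass n a b μ ν (σ p.1.1 == σ p.1.2) (E p)) * f E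

/-- Per-pair mass under the labeled Erdős–Rényi model. -/
noncomputable def erPairMass (n : ℕ) (a b : ℝ) (μ ν : L → ℝ) : Option L → ℝ
  | none => 1 - (a + b) / (2 * n)
  | some ℓ => ((a + b) / (2 * n)) * ((a * μ ℓ + b * ν ℓ) / (a + b))

/-- Mass of a labeled graph under the labeled Erdős–Rényi model. -/
noncomputable def erMass [Fintype L] (n : ℕ) (a b : ℝ) (μ ν : L → ℝ) (E : EdgeConf n L) : ℝ :=
  ∏ p : Pairs n, erPairMass n a b μ ν (E p)

/-- Probability of a labeled-graph event under the labeled Erdős–Rényi model. -/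
noncomputable def erProb [Fintype L] (n : ℕ) (a b : ℝ) (μ ν : L → ℝ)
    (A : Set (EdgeConf n L)) : ℝ :=
  ∑ E : EdgeConf n L, A.indicator (erMass n a b μ ν) E

/-- Expectation of a function of the labeled graph under the labeled Erdős–Rényi model. -/
noncomputable def erExp [Fintype L] (n : ℕ) (a b : ℝ) (μ ν : L → ℝ)
    (f : EdgeConf n L → ℝ) : ℝ :=
  ∑ E : EdgeConf n L, erMass n a b μ ν E * f E

/-- `μ` is a probability distribution on the (finite) label set. -/
def IsProbVec [Fintype L] (μ : L → ℝ) : Prop := (∀ ℓ, 0 ≤ μ ℓ) ∧ ∑ ℓ, μ ℓ = 1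

/-- The reconstruction-threshold parameter `τ`. -/
noncomputable def tau [Fintype L] (a b : ℝ) (μ ν : L → ℝ) : ℝ :=
  ∑ ℓ, (a * μ ℓ - b * ν ℓ) ^ 2 / (2 * (a * μ ℓ + b * ν ℓ))

/-- The weighted adjacency matrix `W` with `W u v = A u v * w (L u v)`. -/
def Wmat {n : ℕ} (w : L → ℝ) (E : EdgeConf n L) : Matrix (Fin n) (Fin n) ℝ :=
  fun u v => match getLabel E u v with
    | none => 0
    | some ℓ => w ℓ

/-- The ±1 vector associated with a Boolean type assignment (`true ↦ +1`). -/
def signVec {n : ℕ} (σ : Fin n → Bool) : Fin n → ℝ := fun u => if σ u then 1 else -1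

/-- `x` is a vector with entries in `{±1}`. -/
def IsSignVec {n : ℕ} (x : Fin n → ℝ) : Prop := ∀ u, x u = 1 ∨ x u = -1

/-- Componentwise sign of a real vector. -/
noncomputable def signR {n : ℕ} (x : Fin n → ℝ) : Fin n → ℝ :=
  fun u => if 0 ≤ x u then 1 else -1

open Classical in
/-- Hamming distance between two vectors. -/
noncomputable def hamming {n : ℕ} (x y : Fin n → ℝ) : ℕ :=
  (univ.filter fun u => x u ≠ y u).card

/-- The overlap `Q(x, y) = 1/2 - (1/n) min(d(x,y), d(x,-y))`. -/
noncomputable def overlap (n : ℕ) (x y : Fin n → ℝ) : ℝ :=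
  1 / 2 - (1 / n) * min (hamming x y : ℝ) (hamming x (-y) : ℝ)

open Classical in
/-- The weight of the cut induced by a ±1 assignment `σ`:
`∑_{(u,v) : u < v, σ_u ≠ σ_v} W_{uv}`. -/
noncomputable def cutWeight {n : ℕ} (w : L → ℝ) (E : EdgeConf n L) (σ : Fin n → ℝ) : ℝ :=
  ∑ p : Pairs n, if σ p.1.1 ≠ σ p.1.2 then Wmat w E p.1.1 p.1.2 else 0

/-- The quadratic form `xᵀ M x`. -/
def quadForm {n : ℕ} (M : Matrix (Fin n) (Fin n) ℝ) (x : Fin n → ℝ) : ℝ :=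
  ∑ u, ∑ v, x u * M u v * x v

/-- The entrywise inner product `⟨A, B⟩ = ∑_{u,v} A u v * B u v`. -/
def mInner {n : ℕ} (A B : Matrix (Fin n) (Fin n) ℝ) : ℝ :=
  ∑ u, ∑ v, A u v * B u v

/-- The degree of a vertex. -/
def degree {n : ℕ} (E : EdgeConf n L) (u : Fin n) : ℕ :=
  (univ.filter fun v => (getLabel E u v).isSome).card

open Classical in
/-- The weighted adjacency matrix of the graph obtained by removing all edges incident
to vertices of degree larger than `(3/2)·(a+b)/2`. -/
noncomputable def prunedW {n : ℕ} (a b : ℝ) (w : L → ℝ) (E : EdgeConf n L) :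
    Matrix (Fin n) (Fin n) ℝ :=
  fun u v =>
    if (degree E u : ℝ) ≤ (3 / 2) * ((a + b) / 2) ∧
       (degree E v : ℝ) ≤ (3 / 2) * ((a + b) / 2)
    then Wmat w E u v else 0

/-- The conditional (given `σ`) entrywise expectation `E[W | σ]` of the weighted
adjacency matrix. -/
noncomputable def condEW {n : ℕ} [Fintype L] (a b : ℝ) (μ ν w : L → ℝ)
    (σ : Fin n → Bool) : Matrix (Fin n) (Fin n) ℝ :=
  fun u v =>
    if u = v then 0
    else if σ u = σ v then (a / n) * ∑ ℓ, μ ℓ * w ℓ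
    else (b / n) * ∑ ℓ, ν ℓ * w ℓ

/-- The matrix `D' = W' - (α/n) J` used in the spectral method, where
`α = (1/2)·∑_ℓ w(ℓ)(aμ(ℓ)+bν(ℓ))` and `J` is the all-one matrix. -/
noncomputable def Dmat {n : ℕ} [Fintype L] (a b : ℝ) (μ ν w : L → ℝ)
    (E : EdgeConf n L) : Matrix (Fin n) (Fin n) ℝ :=
  fun u v => prunedW a b w E u v - ((1 / 2) * ∑ ℓ, w ℓ * (a * μ ℓ + b * ν ℓ)) / n

/-- The spectral norm (ℓ²-operator norm) of a real square matrix. -/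
noncomputable def specNorm {n : ℕ} (M : Matrix (Fin n) (Fin n) ℝ) : ℝ :=
  ‖Matrix.toEuclideanCLM (𝕜 := ℝ) M‖

/-- The number of `k`-cycles carrying the label sequence `ℓ`, in the canonical
orientation: starting from the minimal-index vertex of the cycle toward its
neighbor of smaller index. -/
def cycleCount [DecidableEq L] (n k : ℕ) (E : EdgeConf n L) (ℓ : Fin k → L) : ℕ :=
  if hk : 0 < k then
    haveI : NeZero k := ⟨hk.ne'⟩
    (univ.filter fun c : Fin k → Fin n =>
      Function.Injective c ∧ (∀ i, c 0 ≤ c i) ∧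
      c 1 < c ⟨k - 1, Nat.sub_lt hk one_pos⟩ ∧
      ∀ i : Fin k, getLabel E (c i) (c (i + 1)) = some (ℓ i)).card
  else 0

/-- The Poisson probability mass function. -/
noncomputable def poissonPMF (m : ℝ) (j : ℕ) : ℝ :=
  Real.exp (-m) * m ^ j / (Nat.factorial j)

/-- The mean cycle count `λ([ℓ]_k)` under the labeled Erdős–Rényi model. -/
noncomputable def lamER [Fintype L] (a b : ℝ) (μ ν : L → ℝ) {k : ℕ} (ℓ : Fin k → L) : ℝ :=
  (1 / ((2 : ℝ) ^ (k + 1) * k)) * ∏ i, (a * μ (ℓ i) + b * ν (ℓ i))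

/-- The mean cycle count `ξ([ℓ]_k)` under the labeled SBM. -/
noncomputable def xiSBM [Fintype L] (a b : ℝ) (μ ν : L → ℝ) {k : ℕ} (ℓ : Fin k → L) : ℝ :=
  (1 / ((2 : ℝ) ^ (k + 1) * k)) *
    (∏ i, (a * μ (ℓ i) + b * ν (ℓ i)) + ∏ i, (a * μ (ℓ i) - b * ν (ℓ i)))

/-- The per-pair likelihood-ratio factor `W_{uv}(G, L, σ)` (SBM versus labeled
Erdős–Rényi), as a function of the pair status (`same` type or not) and the
edge/label information on the pair. -/
noncomputable def likPair (n : ℕ) (a b : ℝ) (μ ν : L → ℝ) (same : Bool) :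
    Option L → ℝ
  | some ℓ =>
      if same then 2 * a * μ ℓ / (a * μ ℓ + b * ν ℓ)
      else 2 * b * ν ℓ / (a * μ ℓ + b * ν ℓ)
  | none =>
      if same then (1 - a / n) / (1 - (a + b) / (2 * n))
      else (1 - b / n) / (1 - (a + b) / (2 * n))

/-- The likelihood ratio `Y_n = ℙ_n / ℙ'_n` of the labeled SBM with respect to the
labeled Erdős–Rényi model. -/
noncomputable def Ylik [Fintype L] (n : ℕ) (a b : ℝ) (μ ν : L → ℝ)
    (E : EdgeConf n L) : ℝ :=
  (1 / 2 : ℝ) ^ n * ∑ σ : Fin n → Bool,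
    ∏ p : Pairs n, likPair n a b μ ν (σ p.1.1 == σ p.1.2) (E p)

/-!
Let `P` and `Q` be the laws of the observation on a pair of vertices of equal, respectively
distinct, types, and put `q = (P + Q) / 2` and `f = (P - Q) / (P + Q)`. Given the types `σ`, the
block model has density `1 + σ_u σ_v f` with respect to `q` on the pair `{u, v}`, while the
Erdős–Rényi graph has law `q`. Count the `k`-cycles, each weighted with the product of `f` along its
edges. The signs `σ_u σ_v` multiply to `1` along a cycle, so in the block model the weighted count
has mean `M ≈ (n t) ^ k` whatever the types are, where `t = ∑ q f² ≈ τ / n`; in the Erdős–Rényi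
graph its mean is `0`. In either model the variance is at most a constant times `k² M + O(1 / n)`:
cycles with disjoint edge sets are uncorrelated, and two cycles sharing some but not all edges have
a union with more edges than vertices. Cycles with the same edges contribute `k² M`; in the block
model this needs the average over `σ`, since a fixed `σ` may cost a factor `2 ^ k`. As
`M → τ ^ k`, Chebyshev's inequality at the level `M / 2` bounds the sum of the two error
probabilities by a constant times `k² / τ ^ k` as `n → ∞`, and `k² / τ ^ k → 0` as `k → ∞`.
-/

open scoped BigOperators

section FiniteWeights

lemma sum_indicator_le_of_le_abs_sub {Ω : Type*} [Fintype Ω] {w : Ω → ℝ} (hw : 0 ≤ w)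
    (T : Ω → ℝ) (m : ℝ) {d : ℝ} (hd : 0 < d) {A : Set Ω} (hA : ∀ x ∈ A, d ≤ |T x - m|) :
    ∑ x, A.indicator w x ≤ (∑ x, w x * (T x - m) ^ 2) / d ^ 2 := by
  rw [sum_div]
  refine sum_le_sum fun x _ => Set.indicator_apply_le' (fun hx => ?_) fun _ => ?_
  · rw [le_div_iff₀ (by positivity), ← sq_abs (T x - m)]
    exact mul_le_mul_of_nonneg_left (pow_le_pow_left₀ hd.le (hA x hx) 2) (hw x)
  · exact div_nonneg (mul_nonneg (hw x) (sq_nonneg _)) (sq_nonneg d)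

-- Over a finite type one minimizer serves every `ε` at once, which replaces a diagonal argument.
lemma exists_tendsto_zero_of_eventually_exists_le {ι : Type*} {l : Filter ι} {α : ι → Type*}
    [∀ i, Finite (α i)] [∀ i, Nonempty (α i)] {F : ∀ i, α i → ℝ}
    (hF : ∀ᶠ i in l, ∀ x, 0 ≤ F i x) (h : ∀ ε > 0, ∀ᶠ i in l, ∃ x, F i x ≤ ε) :
    ∃ x : ∀ i, α i, Tendsto (fun i => F i (x i)) l (nhds 0) := by
  choose x hx using fun i => Finite.exists_min (F i)
  refine ⟨x, Metric.tendsto_nhds.2 fun ε hε => ?_⟩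
  filter_upwards [hF, h (ε / 2) (half_pos hε)] with i hi ⟨y, hy⟩
  rw [Real.dist_eq, sub_zero, abs_of_nonneg (hi _)]
  linarith [hx i y]

end FiniteWeights

section Counting

lemma card_filter_card_image_eq_le (ι α : Type*) [Fintype ι] [DecidableEq ι] [Fintype α]
    [DecidableEq α] (s : ℕ) :
    #{g : ι → α | #(univ.image g) = s} ≤ Fintype.card α ^ s * s ^ Fintype.card ι := by
  have hsub : ({g : ι → α | #(univ.image g) = s} : Finset (ι → α)) ⊆
      (powersetCard s univ).biUnion fun S => Fintype.piFinset fun _ => S := fun g hg =>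
    mem_biUnion.2 ⟨univ.image g, mem_powersetCard.2 ⟨subset_univ _, (mem_filter.1 hg).2⟩,
      Fintype.mem_piFinset.2 fun i => mem_image_of_mem g (mem_univ i)⟩
  calc #{g : ι → α | #(univ.image g) = s}
      ≤ ∑ S ∈ powersetCard s univ, #(Fintype.piFinset fun _ : ι => S) :=
        (card_le_card hsub).trans card_biUnion_le
    _ = ∑ _S ∈ powersetCard s (univ : Finset α), s ^ Fintype.card ι :=
        sum_congr rfl fun S hS => by simp [(mem_powersetCard.1 hS).2]
    _ ≤ Fintype.card α ^ s * s ^ Fintype.card ι := by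
        rw [sum_const, card_powersetCard, smul_eq_mul, card_univ]
        exact Nat.mul_le_mul_right _ (Nat.choose_le_pow _ _)

lemma sum_inv_card_pow_card_image_le (ι α : Type*) [Fintype ι] [DecidableEq ι] [Fintype α]
    [DecidableEq α] :
    ∑ g : ι → α, ((Fintype.card α : ℝ)⁻¹) ^ #(univ.image g) ≤
      ∑ s ∈ range (Fintype.card ι + 1), (s : ℝ) ^ Fintype.card ι := by
  have hmem : ∀ g ∈ (univ : Finset (ι → α)), #(univ.image g) ∈ range (Fintype.card ι + 1) :=
    fun g _ => mem_range_succ_iff.2 card_image_le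
  rw [← sum_fiberwise_of_maps_to hmem]
  refine sum_le_sum fun s _ => ?_
  calc ∑ g : ι → α with #(univ.image g) = s, ((Fintype.card α : ℝ)⁻¹) ^ #(univ.image g)
      = #{g : ι → α | #(univ.image g) = s} * ((Fintype.card α : ℝ)⁻¹) ^ s := by
        rw [← nsmul_eq_mul, ← sum_const]
        exact sum_congr rfl fun g hg => by rw [(mem_filter.1 hg).2]
    _ ≤ ((Fintype.card α : ℝ) ^ s * (s : ℝ) ^ Fintype.card ι) * ((Fintype.card α : ℝ)⁻¹) ^ s := by
        gcongr
        exact_mod_cast card_filter_card_image_eq_le ι α s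
    _ = ((Fintype.card α : ℝ) * (Fintype.card α : ℝ)⁻¹) ^ s * (s : ℝ) ^ Fintype.card ι := by
        rw [mul_pow]; ring
    _ ≤ (s : ℝ) ^ Fintype.card ι :=
        mul_le_of_le_one_left (by positivity)
          (pow_le_one₀ (by positivity) mul_inv_le_one)

lemma half_pow_le_descFactorial {n k : ℕ} (h : 2 * k ^ 2 ≤ n) :
    (n : ℝ) ^ k / 2 ≤ n.descFactorial k := by
  obtain rfl | hk := Nat.eq_zero_or_pos k
  · norm_num
  have hkn : k ≤ n := by nlinarith
  have hn : (0 : ℝ) < n := by exact_mod_cast hk.trans_le hkn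
  have hkn' : (k : ℝ) / n ≤ 1 := (div_le_one hn).2 (by exact_mod_cast hkn)
  have h2 : (k : ℝ) * (k / n) ≤ 1 / 2 := by
    rw [mul_div_assoc', div_le_iff₀ hn]
    have : (2 * k ^ 2 : ℝ) ≤ n := by exact_mod_cast h
    linarith
  calc (n : ℝ) ^ k / 2 = n ^ k * (1 / 2) := by ring
    _ ≤ n ^ k * (1 + k * -(k / n)) := by gcongr; linarith
    _ ≤ n ^ k * (1 + -(k / n)) ^ k := by
        gcongr
        exact one_add_mul_le_pow (by linarith) k
    _ = ((n : ℝ) - k) ^ k := by rw [← mul_pow]; congr 1; field_simp; ring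
    _ ≤ ((n + 1 - k : ℕ) : ℝ) ^ k := by
        gcongr
        · exact sub_nonneg.2 (by exact_mod_cast hkn)
        · rw [Nat.cast_sub (by omega)]; push_cast; linarith
    _ ≤ n.descFactorial k := by exact_mod_cast Nat.pow_sub_le_descFactorial n k

end Counting

section TiltedProduct

variable {ι X : Type*} [Fintype ι] {q f : X → ℝ} {s : ι → ℝ}

/-- The product of the weights `q` over `ι`, tilted by `1 + s p * f` in the coordinate `p`.
Both models are of this form: `s = 0` for the Erdős–Rényi graph and `s = σ_u σ_v` for the block
model given the types `σ`. -/
noncomputable def tiltedMass (q f : X → ℝ) (s : ι → ℝ) (E : ι → X) : ℝ :=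
  ∏ p, q (E p) * (1 + s p * f (E p))

variable [Fintype X]

/-- The `j`-th moment of the function `f` under the weights `q`. -/
noncomputable def moment (q f : X → ℝ) (j : ℕ) : ℝ := ∑ x, q x * f x ^ j

lemma moment_two_nonneg (hq : 0 ≤ q) : 0 ≤ moment q f 2 :=
  sum_nonneg fun x _ => mul_nonneg (hq x) (sq_nonneg _)

lemma moment_two_le_moment_zero (hq : 0 ≤ q) (hf : ∀ x, |f x| ≤ 1) :
    moment q f 2 ≤ moment q f 0 :=
  sum_le_sum fun x _ => mul_le_mul_of_nonneg_left
    (by simpa using sq_le_one_iff_abs_le_one (f x) |>.2 (hf x)) (hq x)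

lemma abs_moment_three_le_moment_two (hq : 0 ≤ q) (hf : ∀ x, |f x| ≤ 1) :
    |moment q f 3| ≤ moment q f 2 := by
  refine (abs_sum_le_sum_abs _ _).trans (sum_le_sum fun x _ => ?_)
  rw [abs_mul, abs_of_nonneg (hq x), pow_succ, abs_mul, abs_of_nonneg (sq_nonneg (f x))]
  exact mul_le_mul_of_nonneg_left (mul_le_of_le_one_right (sq_nonneg _) (hf x)) (hq x)

variable [DecidableEq ι]

lemma sum_tiltedMass_mul_prod_pow (q f : X → ℝ) (s : ι → ℝ) (e : ι → ℕ) :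
    ∑ E, tiltedMass q f s E * ∏ p, f (E p) ^ e p =
      ∏ p, (moment q f (e p) + s p * moment q f (e p + 1)) := by
  calc ∑ E, tiltedMass q f s E * ∏ p, f (E p) ^ e p
      = ∏ p, ∑ x, q x * (1 + s p * f x) * f x ^ e p := by
        simp only [tiltedMass, ← prod_mul_distrib, prod_univ_sum, Fintype.piFinset_univ]
    _ = ∏ p, (moment q f (e p) + s p * moment q f (e p + 1)) := by
        refine prod_congr rfl fun p _ => ?_
        rw [moment, moment, mul_sum, ← sum_add_distrib]
        exact sum_congr rfl fun x _ => by ring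

/-- The mixed moment of the monomials of `f` over the coordinate sets `C` and `C'` under the
weights `tiltedMass q f s`. -/
noncomputable def jointMoment (q f : X → ℝ) (s : ι → ℝ) (C C' : Finset ι) : ℝ :=
  ∑ E, tiltedMass q f s E * ((∏ p ∈ C, f (E p)) * ∏ p ∈ C', f (E p))

lemma jointMoment_eq (h0 : moment q f 0 = 1) (h1 : moment q f 1 = 0) (C C' : Finset ι) :
    jointMoment q f s C C' = (∏ p ∈ C ∩ C', (moment q f 2 + s p * moment q f 3)) *
      ∏ p ∈ symmDiff C C', s p * moment q f 2 := by
  have hmonomial : ∀ E : ι → X, (∏ p ∈ C, f (E p)) * ∏ p ∈ C', f (E p) =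
      ∏ p, f (E p) ^ ((if p ∈ C then 1 else 0) + if p ∈ C' then 1 else 0) := fun E => by
    simp only [pow_add, prod_mul_distrib, pow_ite, pow_one, pow_zero, prod_ite_mem, univ_inter]
  simp only [jointMoment, hmonomial, sum_tiltedMass_mul_prod_pow]
  rw [← univ_inter (C ∩ C'), ← univ_inter (symmDiff C C'), ← prod_ite_mem, ← prod_ite_mem,
    ← prod_mul_distrib]
  refine prod_congr rfl fun p _ => ?_
  by_cases hC : p ∈ C <;> by_cases hC' : p ∈ C' <;> simp [hC, hC', h0, h1, mem_symmDiff]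

lemma sum_tiltedMass_mul_prod (h0 : moment q f 0 = 1) (h1 : moment q f 1 = 0) (C : Finset ι) :
    ∑ E, tiltedMass q f s E * ∏ p ∈ C, f (E p) = ∏ p ∈ C, s p * moment q f 2 := by
  have hC : symmDiff C ∅ = C := symmDiff_bot C
  simpa [jointMoment, hC] using jointMoment_eq (s := s) h0 h1 C ∅

lemma sum_tiltedMass (h0 : moment q f 0 = 1) (h1 : moment q f 1 = 0) :
    ∑ E, tiltedMass q f s E = 1 := by
  simpa using sum_tiltedMass_mul_prod (s := s) h0 h1 ∅

lemma abs_jointMoment_le (hq : 0 ≤ q) (hf : ∀ x, |f x| ≤ 1) (hs : ∀ p, |s p| ≤ 1)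
    (h0 : moment q f 0 = 1) (h1 : moment q f 1 = 0) (C C' : Finset ι) :
    |jointMoment q f s C C'| ≤ 2 ^ #(C ∩ C') * moment q f 2 ^ #(C ∪ C') := by
  have ht := moment_two_nonneg (f := f) hq
  have hinter : ∀ p, |moment q f 2 + s p * moment q f 3| ≤ 2 * moment q f 2 := fun p =>
    calc |moment q f 2 + s p * moment q f 3|
        ≤ |moment q f 2| + |s p| * |moment q f 3| := by rw [← abs_mul]; exact abs_add_le _ _
      _ ≤ moment q f 2 + 1 * moment q f 2 := by
          rw [abs_of_nonneg ht]
          gcongr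
          exacts [hs p, abs_moment_three_le_moment_two hq hf]
      _ = 2 * moment q f 2 := by ring
  have hdiff : ∀ p, |s p * moment q f 2| ≤ moment q f 2 := fun p => by
    rw [abs_mul, abs_of_nonneg ht]
    exact mul_le_of_le_one_left ht (hs p)
  rw [jointMoment_eq h0 h1, abs_mul, abs_prod, abs_prod]
  calc (∏ p ∈ C ∩ C', |moment q f 2 + s p * moment q f 3|) *
        ∏ p ∈ symmDiff C C', |s p * moment q f 2|
      ≤ (∏ _p ∈ C ∩ C', 2 * moment q f 2) * ∏ _p ∈ symmDiff C C', moment q f 2 := by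
        gcongr with p _ p _
        exacts [hinter p, hdiff p]
    _ = 2 ^ #(C ∩ C') * moment q f 2 ^ #(C ∪ C') := by
        have hunion : #(C ∪ C') = #(C ∩ C') + #(symmDiff C C') := by
          have hdisj : Disjoint (C ∩ C') (symmDiff C C') := (disjoint_symmDiff_inf C C').symm
          rw [← card_union_of_disjoint hdisj]
          exact congrArg card (inf_sup_symmDiff C C').symm
        rw [prod_const, prod_const, mul_pow, mul_assoc, ← pow_add, hunion]

end TiltedProduct

section Cycles

lemma exists_mem_add_one_notMem {k : ℕ} [NeZero k] {I : Finset (ZMod k)} (hI : I.Nonempty)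
    (hI' : I ≠ univ) : ∃ i ∈ I, i + 1 ∉ I := by
  by_contra! hsucc
  obtain ⟨i, hi⟩ := hI
  have hmem : ∀ j : ℕ, i + j ∈ I := fun j => by
    induction j with
    | zero => simpa using hi
    | succ j ih => simpa [add_assoc] using hsucc _ ih
  exact hI' (eq_univ_iff_forall.2 fun x => by simpa using hmem (x - i).val)

variable {n k : ℕ} [hk : Fact (2 < k)]

instance neZero_of_fact_two_lt : NeZero k := ⟨by have := hk.out; omega⟩

instance fact_one_lt_of_fact_two_lt : Fact (1 < k) := ⟨by have := hk.out; omega⟩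

/-- Rooted and oriented `k`-cycles of the complete graph on `Fin n`, as embeddings of `ZMod k`;
every unoriented cycle is counted `2 * k` times. -/
abbrev Cycle (k n : ℕ) := ZMod k ↪ Fin n

namespace Cycle

lemma apply_ne_apply_add_one (c : Cycle k n) (i : ZMod k) : c i ≠ c (i + 1) :=
  fun h => one_ne_zero (left_eq_add.1 (c.injective h))

lemma apply_ne_apply_add_one_add_one (c : Cycle k n) (i : ZMod k) : c i ≠ c (i + 1 + 1) := by
  rw [c.injective.ne_iff, add_assoc, ne_eq, left_eq_add]
  exact fun h => ZMod.neg_one_ne_one (neg_eq_of_add_eq_zero_left h)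

/-- The edge `{c i, c (i + 1)}` of the cycle `c`, as an increasing pair. -/
def edge (c : Cycle k n) (i : ZMod k) : Pairs n :=
  ⟨(min (c i) (c (i + 1)), max (c i) (c (i + 1))), min_lt_max.2 (c.apply_ne_apply_add_one i)⟩

lemma edge_eq_edge {c c' : Cycle k n} {i j : ZMod k} (h : c.edge i = c'.edge j) :
    c i = c' j ∧ c (i + 1) = c' (j + 1) ∨ c i = c' (j + 1) ∧ c (i + 1) = c' j := by
  have hmin : min (c i) (c (i + 1)) = min (c' j) (c' (j + 1)) := congrArg (·.1.1) h
  have hmax : max (c i) (c (i + 1)) = max (c' j) (c' (j + 1)) := congrArg (·.1.2) h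
  rcases le_total (c i) (c (i + 1)) with hi | hi <;>
    rcases le_total (c' j) (c' (j + 1)) with hj | hj <;> simp_all

lemma edge_injective (c : Cycle k n) : Function.Injective c.edge := by
  intro i j h
  rcases edge_eq_edge h with ⟨hij, -⟩ | ⟨hij, hij'⟩
  · exact c.injective hij
  · rw [c.injective hij] at hij'
    exact absurd hij'.symm (c.apply_ne_apply_add_one_add_one j)

/-- The edge set of the cycle `c`. -/
def edges (c : Cycle k n) : Finset (Pairs n) := univ.image c.edge

/-- The vertex set of the cycle `c`. -/
def verts (c : Cycle k n) : Finset (Fin n) := univ.map c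

lemma edge_mem_edges (c : Cycle k n) (i : ZMod k) : c.edge i ∈ c.edges :=
  mem_image_of_mem _ (mem_univ i)

lemma prod_edges {M : Type*} [CommMonoid M] (c : Cycle k n) (g : Pairs n → M) :
    ∏ p ∈ c.edges, g p = ∏ i, g (c.edge i) :=
  prod_image c.edge_injective.injOn

lemma card_edges (c : Cycle k n) : #c.edges = k := by
  rw [edges, card_image_of_injective _ c.edge_injective, card_univ, ZMod.card]

lemma card_verts (c : Cycle k n) : #c.verts = k := by
  rw [verts, card_map, card_univ, ZMod.card]

lemma card_verts_union_le (c c' : Cycle k n) : #(c.verts ∪ c'.verts) ≤ 2 * k := by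
  simpa [card_verts, two_mul] using card_union_le c.verts c'.verts

lemma mem_verts_of_edge_mem_edges {c c' : Cycle k n} {i : ZMod k} (h : c.edge i ∈ c'.edges) :
    c i ∈ c'.verts ∧ c (i + 1) ∈ c'.verts := by
  obtain ⟨j, -, hj⟩ := mem_image.1 h
  have hmem : ∀ l, c' l ∈ c'.verts := fun l => mem_map_of_mem _ (mem_univ l)
  rcases edge_eq_edge hj.symm with ⟨h₁, h₂⟩ | ⟨h₁, h₂⟩ <;> simp [h₁, h₂, hmem]

-- The common edges form paths along `c`, and a path has more vertices than edges.
lemma card_inter_edges_lt_card_inter_verts {c c' : Cycle k n} (hne : c.edges ≠ c'.edges)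
    (hinter : (c.edges ∩ c'.edges).Nonempty) : #(c.edges ∩ c'.edges) < #(c.verts ∩ c'.verts) := by
  set I : Finset (ZMod k) := {i | c.edge i ∈ c'.edges}
  have hedges : c.edges ∩ c'.edges = I.image c.edge :=
    filter_mem_eq_inter.symm.trans filter_image
  have hI_ne : I ≠ univ := fun h => hne <| eq_of_subset_of_card_le
    (inter_eq_left.1 (by rw [hedges, h, edges])) (by rw [card_edges, card_edges])
  obtain ⟨i, hi, hi'⟩ := exists_mem_add_one_notMem (image_nonempty.1 (hedges ▸ hinter)) hI_ne
  have hverts : (insert (i + 1) I).map c ⊆ c.verts ∩ c'.verts := by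
    refine subset_inter (map_subset_map.2 (subset_univ _)) fun v hv => ?_
    obtain ⟨j, hj, rfl⟩ := mem_map.1 hv
    obtain rfl | hj := mem_insert.1 hj
    · exact (mem_verts_of_edge_mem_edges (mem_filter.1 hi).2).2
    · exact (mem_verts_of_edge_mem_edges (mem_filter.1 hj).2).1
  calc #(c.edges ∩ c'.edges) = #I := by rw [hedges, card_image_of_injective _ c.edge_injective]
    _ < #((insert (i + 1) I).map c) := by rw [card_map, card_insert_of_notMem hi']; omega
    _ ≤ #(c.verts ∩ c'.verts) := card_le_card hverts

lemma card_union_verts_lt_card_union_edges {c c' : Cycle k n} (hne : c.edges ≠ c'.edges)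
    (hinter : (c.edges ∩ c'.edges).Nonempty) : #(c.verts ∪ c'.verts) < #(c.edges ∪ c'.edges) := by
  have hlt := card_inter_edges_lt_card_inter_verts hne hinter
  have hE := card_union_add_card_inter c.edges c'.edges
  have hV := card_union_add_card_inter c.verts c'.verts
  rw [card_edges, card_edges] at hE
  rw [card_verts, card_verts] at hV
  omega

lemma eq_of_edges_eq {c c' : Cycle k n} (h : c.edges = c'.edges) (h0 : c 0 = c' 0)
    (h1 : c 1 = c' 1) : c = c' := by
  set I : Finset (ZMod k) := {i | c i = c' i ∧ c (i + 1) = c' (i + 1)} with hI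
  have hsucc : ∀ i ∈ I, i + 1 ∈ I := fun i hi => by
    obtain ⟨hi, hi'⟩ := (mem_filter.1 hi).2
    refine mem_filter.2 ⟨mem_univ _, hi', ?_⟩
    obtain ⟨j, -, hj⟩ := mem_image.1 (h ▸ c.edge_mem_edges (i + 1))
    rcases edge_eq_edge hj with ⟨hj, hj'⟩ | ⟨hj, hj'⟩
    · rw [← hj', c'.injective (hj.trans hi')]
    · rw [add_right_cancel (c'.injective (hj'.trans hi')), ← hi] at hj
      exact absurd hj (c.apply_ne_apply_add_one_add_one i)
  have hI_univ : I = univ := by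
    by_contra hne
    obtain ⟨i, hi, hi'⟩ := exists_mem_add_one_notMem ⟨0, by simp [hI, h0, h1]⟩ hne
    exact hi' (hsucc i hi)
  ext1 i
  exact (mem_filter.1 (hI_univ ▸ mem_univ i : i ∈ I)).2.1

lemma card_filter_edges_eq_le (c : Cycle k n) :
    #{c' : Cycle k n | c.edges = c'.edges} ≤ k ^ 2 := by
  calc #{c' : Cycle k n | c.edges = c'.edges} ≤ #(c.verts ×ˢ c.verts) := by
        refine card_le_card_of_injOn (fun c' => (c' 0, c' 1)) (fun c' hc' => ?_) ?_
        · have hmem := c'.edge_mem_edges 0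
          rw [← (mem_filter.1 hc').2] at hmem
          simpa using mem_verts_of_edge_mem_edges hmem
        · intro c₁ hc₁ c₂ hc₂ heq
          obtain ⟨h0, h1⟩ := Prod.mk.inj heq
          exact eq_of_edges_eq ((mem_filter.1 hc₁).2.symm.trans (mem_filter.1 hc₂).2) h0 h1
    _ = k ^ 2 := by rw [card_product, card_verts, sq]

lemma sum_inv_pow_card_union_verts_le (k n : ℕ) [Fact (2 < k)] :
    ∑ c : Cycle k n, ∑ c' : Cycle k n, ((n : ℝ)⁻¹) ^ #(c.verts ∪ c'.verts) ≤
      ∑ s ∈ range (2 * k + 1), (s : ℝ) ^ (2 * k) := by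
  let join : Cycle k n × Cycle k n → (ZMod k ⊕ ZMod k → Fin n) := fun x => Sum.elim x.1 x.2
  have hjoin : Function.Injective join := fun x y h =>
    Prod.ext (DFunLike.ext _ _ fun i => congrFun h (.inl i))
      (DFunLike.ext _ _ fun i => congrFun h (.inr i))
  have hverts : ∀ x, x.1.verts ∪ x.2.verts = univ.image (join x) := fun x => by
    ext v
    simp [verts, join]
  calc ∑ c : Cycle k n, ∑ c' : Cycle k n, ((n : ℝ)⁻¹) ^ #(c.verts ∪ c'.verts)
      = ∑ g ∈ univ.image join, ((n : ℝ)⁻¹) ^ #(univ.image g) := by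
        rw [sum_image hjoin.injOn, ← univ_product_univ, sum_product]
        exact sum_congr rfl fun c _ => sum_congr rfl fun c' _ => by rw [← hverts (c, c')]
    _ ≤ ∑ g, ((n : ℝ)⁻¹) ^ #(univ.image g) :=
        sum_le_sum_of_subset_of_nonneg (subset_univ _) fun _ _ _ => by positivity
    _ ≤ ∑ s ∈ range (2 * k + 1), (s : ℝ) ^ (2 * k) := by
        simpa [two_mul] using sum_inv_card_pow_card_image_le (ZMod k ⊕ ZMod k) (Fin n)

/-- Bounds the contribution of the pairs of `k`-cycles with edge probabilities `t ≤ B / n` whose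
union has more edges than vertices to a second moment; it is of order `1 / n`. -/
noncomputable def overlapBound (k : ℕ) (B : ℝ) : ℝ :=
  B ^ (2 * k + 1) * ∑ s ∈ range (2 * k + 1), (s : ℝ) ^ (2 * k)

lemma sum_pow_card_union_verts_add_one_le {t B : ℝ} (ht : 0 ≤ t) (htB : t ≤ B / n) (hB : 1 ≤ B) :
    ∑ c : Cycle k n, ∑ c' : Cycle k n, t ^ (#(c.verts ∪ c'.verts) + 1) ≤ overlapBound k B / n := by
  have hterm : ∀ c c' : Cycle k n, t ^ (#(c.verts ∪ c'.verts) + 1) ≤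
      B ^ (2 * k + 1) / n * ((n : ℝ)⁻¹) ^ #(c.verts ∪ c'.verts) := fun c c' =>
    calc t ^ (#(c.verts ∪ c'.verts) + 1) ≤ (B / n) ^ (#(c.verts ∪ c'.verts) + 1) := by gcongr
      _ = B ^ (#(c.verts ∪ c'.verts) + 1) / n * ((n : ℝ)⁻¹) ^ #(c.verts ∪ c'.verts) := by
          rw [div_eq_mul_inv, mul_pow, pow_succ (n : ℝ)⁻¹]
          ring
      _ ≤ B ^ (2 * k + 1) / n * ((n : ℝ)⁻¹) ^ #(c.verts ∪ c'.verts) := by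
          gcongr
          exact card_verts_union_le c c'
  calc ∑ c : Cycle k n, ∑ c' : Cycle k n, t ^ (#(c.verts ∪ c'.verts) + 1)
      ≤ B ^ (2 * k + 1) / n *
          ∑ c : Cycle k n, ∑ c' : Cycle k n, ((n : ℝ)⁻¹) ^ #(c.verts ∪ c'.verts) := by
        simp only [mul_sum]
        gcongr with c _ c' _
        exact hterm c c'
    _ ≤ B ^ (2 * k + 1) / n * ∑ s ∈ range (2 * k + 1), (s : ℝ) ^ (2 * k) := by
        gcongr
        exact sum_inv_pow_card_union_verts_le k n
    _ = overlapBound k B / n := by rw [overlapBound]; ring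

lemma half_pow_le_card (hn : 2 * k ^ 2 ≤ n) : (n : ℝ) ^ k / 2 ≤ Fintype.card (Cycle k n) := by
  rw [Fintype.card_embedding_eq, Fintype.card_fin, ZMod.card]
  exact half_pow_le_descFactorial hn

end Cycle

end Cycles

section Signs

variable {n k : ℕ} (σ : Fin n → Bool)

/-- The product `σ_u σ_v` of the types of the endpoints of the pair `p = (u, v)`. -/
def pairSign (p : Pairs n) : ℝ := signVec σ p.1.1 * signVec σ p.1.2

lemma signVec_mul_self (u : Fin n) : signVec σ u * signVec σ u = 1 := by
  unfold signVec
  split_ifs <;> norm_num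

lemma abs_signVec (u : Fin n) : |signVec σ u| = 1 := by
  unfold signVec
  split_ifs <;> norm_num

lemma abs_pairSign (p : Pairs n) : |pairSign σ p| = 1 := by
  rw [pairSign, abs_mul, abs_signVec, abs_signVec, one_mul]

lemma signVec_update_not_self (v : Fin n) :
    signVec (Function.update σ v (!σ v)) v = -signVec σ v := by
  cases h : σ v <;> simp [signVec, h]

lemma signVec_update_of_ne {u v : Fin n} (huv : u ≠ v) (x : Bool) :
    signVec (Function.update σ v x) u = signVec σ u := by
  rw [signVec, Function.update_of_ne huv, signVec]

variable [Fact (2 < k)] (c : Cycle k n)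

lemma pairSign_edge (i : ZMod k) :
    pairSign σ (c.edge i) = signVec σ (c i) * signVec σ (c (i + 1)) := by
  rcases le_total (c i) (c (i + 1)) with h | h <;> simp [pairSign, Cycle.edge, h, mul_comm]

lemma prod_pairSign_edges : ∏ p ∈ c.edges, pairSign σ p = 1 := by
  have hshift : ∏ i, signVec σ (c (i + 1)) = ∏ i, signVec σ (c i) :=
    Equiv.prod_comp (Equiv.addRight (1 : ZMod k)) fun i => signVec σ (c i)
  simp only [c.prod_edges, pairSign_edge, prod_mul_distrib, hshift]
  simp only [← prod_mul_distrib, signVec_mul_self, prod_const_one]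

lemma prod_pairSign_update {I : Finset (ZMod k)} {i : ZMod k} (hi : i ∈ I) (hi' : i + 1 ∉ I) :
    ∏ j ∈ I, pairSign (Function.update σ (c (i + 1)) (!σ (c (i + 1)))) (c.edge j) =
      -∏ j ∈ I, pairSign σ (c.edge j) := by
  rw [← mul_prod_erase _ _ hi, ← mul_prod_erase _ _ hi, ← neg_mul]
  congr 1
  · rw [pairSign_edge, pairSign_edge, signVec_update_not_self,
      signVec_update_of_ne σ (c.apply_ne_apply_add_one i), mul_neg]
  · refine prod_congr rfl fun j hj => ?_
    obtain ⟨hji, hj⟩ := mem_erase.1 hj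
    rw [pairSign_edge, pairSign_edge, signVec_update_of_ne, signVec_update_of_ne]
    · exact fun h => hji (add_right_cancel (c.injective h))
    · exact fun h => hi' (c.injective h ▸ hj)

-- Flipping the type of a vertex which meets exactly one edge of `I` changes the sign.
lemma sum_prod_pairSign_eq_zero {I : Finset (ZMod k)} (hI : I.Nonempty) (hI' : I ≠ univ) :
    ∑ σ : Fin n → Bool, ∏ i ∈ I, pairSign σ (c.edge i) = 0 := by
  obtain ⟨i, hi, hi'⟩ := exists_mem_add_one_notMem hI hI'
  refine sum_involution (fun σ _ => Function.update σ (c (i + 1)) (!σ (c (i + 1)))) ?_ ?_ ?_ ?_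
  · intro σ _
    rw [prod_pairSign_update σ c hi hi', add_neg_cancel]
  · intro σ _ _ h
    simpa using congrFun h (c (i + 1))
  · exact fun _ _ => mem_univ _
  · intro σ _
    simp

lemma expect_prod_add_pairSign_mul (t r : ℝ) :
    𝔼 σ : Fin n → Bool, ∏ p ∈ c.edges, (t + pairSign σ p * r) = t ^ k + r ^ k := by
  have hexpand : ∀ σ : Fin n → Bool, ∏ p ∈ c.edges, (t + pairSign σ p * r) =
      ∑ I : Finset (ZMod k), (∏ i ∈ I, pairSign σ (c.edge i)) * (r ^ #I * t ^ #Iᶜ) := fun σ => by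
    simp only [c.prod_edges, add_comm t, Fintype.prod_add, prod_mul_distrib, prod_const, mul_assoc]
  simp only [hexpand, expect_sum_comm, ← expect_mul]
  rw [Fintype.sum_eq_add (∅ : Finset (ZMod k)) univ univ_nonempty.ne_empty.symm]
  · have hone : ∀ σ : Fin n → Bool, ∏ i, pairSign σ (c.edge i) = 1 := fun σ => by
      rw [← c.prod_edges, prod_pairSign_edges]
    simp [hone]
  · intro I hI
    rw [Fintype.expect_eq_sum_div_card,
      sum_prod_pairSign_eq_zero c (nonempty_iff_ne_empty.2 hI.1) hI.2, zero_div, zero_mul]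

variable {X : Type*} [Fintype X] {q f : X → ℝ}

lemma expect_jointMoment_self (h0 : moment q f 0 = 1) (h1 : moment q f 1 = 0) :
    𝔼 σ : Fin n → Bool, jointMoment q f (pairSign σ) c.edges c.edges =
      moment q f 2 ^ k + moment q f 3 ^ k := by
  have hempty : symmDiff c.edges c.edges = ∅ := symmDiff_self _
  simp only [jointMoment_eq h0 h1, inter_self, hempty, prod_empty, mul_one,
    expect_prod_add_pairSign_mul]

lemma jointMoment_pairSign_of_disjoint (h0 : moment q f 0 = 1) (h1 : moment q f 1 = 0)
    {c c' : Cycle k n} (h : Disjoint c.edges c'.edges) :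
    jointMoment q f (pairSign σ) c.edges c'.edges = moment q f 2 ^ (2 * k) := by
  have hunion : symmDiff c.edges c'.edges = c.edges ∪ c'.edges := h.symmDiff_eq_sup
  rw [jointMoment_eq h0 h1, disjoint_iff_inter_eq_empty.1 h, prod_empty, one_mul, hunion,
    prod_union h]
  simp only [prod_mul_distrib, prod_const, prod_pairSign_edges, Cycle.card_edges, one_mul]
  ring

end Signs

section CycleStatistic

variable {X : Type*} {n k : ℕ} [Fact (2 < k)]

/-- The weighted number of rooted oriented `k`-cycles of the configuration `E`, each cycle being
counted with the product of the values of `f` along its edges. -/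
noncomputable def cycleStat (k : ℕ) [Fact (2 < k)] (f : X → ℝ) (E : Pairs n → X) : ℝ :=
  ∑ c : Cycle k n, ∏ p ∈ c.edges, f (E p)

variable [Fintype X] {q f : X → ℝ}

/-- The expectation of `cycleStat k f` in the block model, which does not depend on the types. -/
noncomputable def cycleMean (k n : ℕ) [Fact (2 < k)] (q f : X → ℝ) : ℝ :=
  Fintype.card (Cycle k n) * moment q f 2 ^ k

lemma sum_tiltedMass_mul_cycleStat (h0 : moment q f 0 = 1) (h1 : moment q f 1 = 0)
    (σ : Fin n → Bool) :
    ∑ E, tiltedMass q f (pairSign σ) E * cycleStat k f E = cycleMean k n q f := by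
  simp only [cycleStat, mul_sum]
  rw [sum_comm]
  simp only [sum_tiltedMass_mul_prod h0 h1, prod_mul_distrib, prod_pairSign_edges, prod_const,
    Cycle.card_edges, one_mul]
  rw [sum_const, nsmul_eq_mul, card_univ, cycleMean]

lemma sum_tiltedMass_mul_cycleStat_sq (q f : X → ℝ) (s : Pairs n → ℝ) :
    ∑ E, tiltedMass q f s E * cycleStat k f E ^ 2 =
      ∑ c : Cycle k n, ∑ c' : Cycle k n, jointMoment q f s c.edges c'.edges := by
  simp only [cycleStat, sq, sum_mul_sum]
  simp only [mul_sum, jointMoment]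
  rw [sum_comm]
  exact sum_congr rfl fun c _ => sum_comm

lemma sum_ite_edges_eq_le {y : ℝ} (hy : 0 ≤ y) :
    ∑ c : Cycle k n, ∑ c' : Cycle k n, (if c.edges = c'.edges then y else 0) ≤
      k ^ 2 * (Fintype.card (Cycle k n) * y) := by
  calc ∑ c : Cycle k n, ∑ c' : Cycle k n, (if c.edges = c'.edges then y else 0)
      = ∑ c : Cycle k n, #{c' : Cycle k n | c.edges = c'.edges} * y := by
        simp only [← sum_filter, sum_const, nsmul_eq_mul]
    _ ≤ ∑ _c : Cycle k n, (k : ℝ) ^ 2 * y := by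
        gcongr with c _
        exact_mod_cast c.card_filter_edges_eq_le
    _ = k ^ 2 * (Fintype.card (Cycle k n) * y) := by
        rw [sum_const, nsmul_eq_mul, card_univ]
        ring

lemma jointMoment_zero_edges (h0 : moment q f 0 = 1) (h1 : moment q f 1 = 0) (c c' : Cycle k n) :
    jointMoment q f 0 c.edges c'.edges =
      if c.edges = c'.edges then moment q f 2 ^ k else 0 := by
  rw [jointMoment_eq h0 h1]
  split_ifs with h
  · simp [h, Cycle.card_edges]
  · have hne : symmDiff c.edges c'.edges ≠ ∅ := fun h' => h (symmDiff_eq_bot.1 h')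
    obtain ⟨p, hp⟩ := nonempty_iff_ne_empty.2 hne
    rw [prod_eq_zero hp (by simp), mul_zero]

lemma sum_tiltedMass_zero_mul_cycleStat_sq_le (hq : 0 ≤ q) (h0 : moment q f 0 = 1)
    (h1 : moment q f 1 = 0) :
    ∑ E : Pairs n → X, tiltedMass q f 0 E * cycleStat k f E ^ 2 ≤ k ^ 2 * cycleMean k n q f := by
  simp only [sum_tiltedMass_mul_cycleStat_sq, jointMoment_zero_edges h0 h1]
  exact sum_ite_edges_eq_le (pow_nonneg (moment_two_nonneg hq) k)

lemma expect_jointMoment_sub_le (hq : 0 ≤ q) (hf : ∀ x, |f x| ≤ 1) (h0 : moment q f 0 = 1)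
    (h1 : moment q f 1 = 0) (c c' : Cycle k n) :
    𝔼 σ : Fin n → Bool, jointMoment q f (pairSign σ) c.edges c'.edges - moment q f 2 ^ (2 * k) ≤
      (if c.edges = c'.edges then 2 * moment q f 2 ^ k else 0) +
        2 ^ k * moment q f 2 ^ (#(c.verts ∪ c'.verts) + 1) := by
  have ht := moment_two_nonneg (f := f) hq
  by_cases hEq : c.edges = c'.edges
  · have hr : moment q f 3 ^ k ≤ moment q f 2 ^ k :=
      (le_abs_self _).trans <| (abs_pow _ _).trans_le <|
        pow_le_pow_left₀ (abs_nonneg _) (abs_moment_three_le_moment_two hq hf) k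
    rw [if_pos hEq, ← hEq, expect_jointMoment_self c h0 h1]
    have : 0 ≤ 2 ^ k * moment q f 2 ^ (#(c.verts ∪ c'.verts) + 1) := by positivity
    linarith [pow_nonneg ht (2 * k)]
  rw [if_neg hEq, zero_add, sub_le_iff_le_add]
  by_cases hDisj : Disjoint c.edges c'.edges
  · simp only [jointMoment_pairSign_of_disjoint _ h0 h1 hDisj, Fintype.expect_const]
    exact le_add_of_nonneg_left (by positivity)
  refine le_add_of_le_of_nonneg (expect_le univ_nonempty fun σ _ => ?_) (by positivity)
  have hlt := Cycle.card_union_verts_lt_card_union_edges hEq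
    (not_disjoint_iff_nonempty_inter.1 hDisj)
  have ht1 : moment q f 2 ≤ 1 := (moment_two_le_moment_zero hq hf).trans_eq h0
  calc jointMoment q f (pairSign σ) c.edges c'.edges
      ≤ 2 ^ #(c.edges ∩ c'.edges) * moment q f 2 ^ #(c.edges ∪ c'.edges) :=
        (le_abs_self _).trans <|
          abs_jointMoment_le hq hf (fun p => (abs_pairSign σ p).le) h0 h1 _ _
    _ ≤ 2 ^ k * moment q f 2 ^ (#(c.verts ∪ c'.verts) + 1) := by
        gcongr ?_ * ?_
        · exact pow_le_pow_right₀ one_le_two <|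
            (card_le_card inter_subset_left).trans_eq c.card_edges
        · exact pow_le_pow_of_le_one ht ht1 hlt

lemma sum_tiltedMass_mul_sub_sq (h0 : moment q f 0 = 1) (h1 : moment q f 1 = 0)
    (σ : Fin n → Bool) :
    ∑ E, tiltedMass q f (pairSign σ) E * (cycleStat k f E - cycleMean k n q f) ^ 2 =
      ∑ c : Cycle k n, ∑ c' : Cycle k n,
        (jointMoment q f (pairSign σ) c.edges c'.edges - moment q f 2 ^ (2 * k)) := by
  set M := cycleMean k n q f with hM
  have hsq : M ^ 2 = ∑ _c : Cycle k n, ∑ _c' : Cycle k n, moment q f 2 ^ (2 * k) := by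
    rw [hM, cycleMean, sum_const, sum_const, card_univ, nsmul_eq_mul, nsmul_eq_mul]
    ring
  calc ∑ E, tiltedMass q f (pairSign σ) E * (cycleStat k f E - M) ^ 2
      = ∑ E, tiltedMass q f (pairSign σ) E * cycleStat k f E ^ 2 -
          2 * M * ∑ E, tiltedMass q f (pairSign σ) E * cycleStat k f E +
          M ^ 2 * ∑ E, tiltedMass q f (pairSign σ) E := by
        rw [mul_sum, mul_sum, ← sum_sub_distrib, ← sum_add_distrib]
        exact sum_congr rfl fun E _ => by ring
    _ = ∑ E, tiltedMass q f (pairSign σ) E * cycleStat k f E ^ 2 - M ^ 2 := by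
        rw [sum_tiltedMass_mul_cycleStat h0 h1, sum_tiltedMass h0 h1]
        ring
    _ = _ := by simp only [sum_tiltedMass_mul_cycleStat_sq, hsq, sum_sub_distrib]

lemma expect_sum_tiltedMass_mul_sub_sq_le (hq : 0 ≤ q) (hf : ∀ x, |f x| ≤ 1)
    (h0 : moment q f 0 = 1) (h1 : moment q f 1 = 0) {B : ℝ} (hB : 1 ≤ B)
    (htB : moment q f 2 ≤ B / n) :
    𝔼 σ : Fin n → Bool, ∑ E,
        tiltedMass q f (pairSign σ) E * (cycleStat k f E - cycleMean k n q f) ^ 2 ≤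
      2 * k ^ 2 * cycleMean k n q f + 2 ^ k * (Cycle.overlapBound k B / n) := by
  have ht := moment_two_nonneg (f := f) hq
  simp only [sum_tiltedMass_mul_sub_sq h0 h1, expect_sum_comm, expect_sub_distrib,
    Fintype.expect_const]
  calc ∑ c : Cycle k n, ∑ c' : Cycle k n,
        (𝔼 σ : Fin n → Bool, jointMoment q f (pairSign σ) c.edges c'.edges -
          moment q f 2 ^ (2 * k))
      ≤ ∑ c : Cycle k n, ∑ c' : Cycle k n,
          ((if c.edges = c'.edges then 2 * moment q f 2 ^ k else 0) +
            2 ^ k * moment q f 2 ^ (#(c.verts ∪ c'.verts) + 1)) := by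
        gcongr with c _ c' _
        exact expect_jointMoment_sub_le hq hf h0 h1 c c'
    _ = ∑ c : Cycle k n, ∑ c' : Cycle k n,
          (if c.edges = c'.edges then 2 * moment q f 2 ^ k else 0) +
        2 ^ k * ∑ c : Cycle k n, ∑ c' : Cycle k n,
          moment q f 2 ^ (#(c.verts ∪ c'.verts) + 1) := by
        simp only [sum_add_distrib, mul_sum]
    _ ≤ k ^ 2 * (Fintype.card (Cycle k n) * (2 * moment q f 2 ^ k)) +
          2 ^ k * (Cycle.overlapBound k B / n) := by
        gcongr
        exacts [sum_ite_edges_eq_le (by positivity),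
          Cycle.sum_pow_card_union_verts_add_one_le ht htB hB]
    _ = 2 * k ^ 2 * cycleMean k n q f + 2 ^ k * (Cycle.overlapBound k B / n) := by
        rw [cycleMean]
        ring

end CycleStatistic

section Score

variable {X : Type*} {P Q : X → ℝ}

/-- The average of the weights `P` and `Q`. -/
noncomputable def avgMass (P Q : X → ℝ) (x : X) : ℝ := (P x + Q x) / 2

/-- The normalized difference of the weights `P` and `Q`, for which `P = avgMass * (1 + score)`
and `Q = avgMass * (1 - score)`. It vanishes where `P = Q = 0`. -/
noncomputable def score (P Q : X → ℝ) (x : X) : ℝ := (P x - Q x) / (P x + Q x)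

lemma avgMass_nonneg (hP : 0 ≤ P) (hQ : 0 ≤ Q) : 0 ≤ avgMass P Q :=
  fun x => div_nonneg (add_nonneg (hP x) (hQ x)) zero_le_two

lemma abs_score_le_one (hP : 0 ≤ P) (hQ : 0 ≤ Q) (x : X) : |score P Q x| ≤ 1 := by
  have hPx : 0 ≤ P x := hP x
  have hQx : 0 ≤ Q x := hQ x
  rw [score, abs_div, abs_of_nonneg (add_nonneg hPx hQx)]
  exact div_le_one_of_le₀ (abs_le.2 ⟨by linarith, by linarith⟩) (add_nonneg hPx hQx)

lemma avgMass_mul_score (hP : 0 ≤ P) (hQ : 0 ≤ Q) (x : X) :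
    avgMass P Q x * score P Q x = (P x - Q x) / 2 := by
  have hPx : 0 ≤ P x := hP x
  have hQx : 0 ≤ Q x := hQ x
  rw [avgMass, score]
  by_cases h : P x + Q x = 0
  · rw [h, show P x = 0 by linarith, show Q x = 0 by linarith]
    simp
  · field_simp

variable [Fintype X]

lemma moment_avgMass_score_zero (hP : IsProbVec P) (hQ : IsProbVec Q) :
    moment (avgMass P Q) (score P Q) 0 = 1 := by
  simp only [moment, avgMass, pow_zero, mul_one]
  rw [← sum_div, sum_add_distrib, hP.2, hQ.2]
  norm_num

lemma moment_avgMass_score_two (hP : 0 ≤ P) (hQ : 0 ≤ Q) :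
    moment (avgMass P Q) (score P Q) 2 = ∑ x, (P x - Q x) ^ 2 / (2 * (P x + Q x)) := by
  refine sum_congr rfl fun x _ => ?_
  rw [sq, ← mul_assoc, avgMass_mul_score hP hQ, score, div_mul_div_comm, sq]

lemma moment_avgMass_score_one (hP : IsProbVec P) (hQ : IsProbVec Q) :
    moment (avgMass P Q) (score P Q) 1 = 0 := by
  simp only [moment, pow_one, avgMass_mul_score hP.1 hQ.1]
  rw [← sum_div, sum_sub_distrib, hP.2, hQ.2, sub_self, zero_div]

end Score

section Models

variable {n : ℕ} {a b : ℝ} {μ ν : L → ℝ}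

/-- The score of an edge observation, comparing pairs of equal types to pairs of distinct types. On
labeled edges it is the weight `(a μ - b ν) / (a μ + b ν)`. -/
noncomputable def pairScore (n : ℕ) (a b : ℝ) (μ ν : L → ℝ) : Option L → ℝ :=
  score (sbmPairMass n a b μ ν true) (sbmPairMass n a b μ ν false)

lemma erPairMass_eq_avgMass (hab : a + b ≠ 0) :
    erPairMass n a b μ ν =
      avgMass (sbmPairMass n a b μ ν true) (sbmPairMass n a b μ ν false) := by
  ext (_ | ℓ)
  · simp only [erPairMass, avgMass, sbmPairMass, if_true, Bool.false_eq_true, if_false]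
    ring
  · simp only [erPairMass, avgMass, sbmPairMass, if_true, Bool.false_eq_true, if_false]
    rw [div_mul_div_comm, mul_comm (2 * (n : ℝ)), mul_div_mul_left _ _ hab]
    ring

lemma pairSign_eq_ite (σ : Fin n → Bool) (p : Pairs n) :
    pairSign σ p = if σ p.1.1 == σ p.1.2 then 1 else -1 := by
  unfold pairSign signVec
  cases σ p.1.1 <;> cases σ p.1.2 <;> simp

variable [Fintype L]

lemma isProbVec_sbmPairMass (ha : 0 ≤ a) (hb : 0 ≤ b) (han : a ≤ n) (hbn : b ≤ n)
    (hμ : IsProbVec μ) (hν : IsProbVec ν) (same : Bool) :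
    IsProbVec (sbmPairMass n a b μ ν same) := by
  have ha' : a / n ≤ 1 := div_le_one_of_le₀ han n.cast_nonneg
  have hb' : b / n ≤ 1 := div_le_one_of_le₀ hbn n.cast_nonneg
  have ha₀ : 0 ≤ a / n := by positivity
  have hb₀ : 0 ≤ b / n := by positivity
  refine ⟨fun x => ?_, ?_⟩
  · cases same <;> cases x <;>
      simp [sbmPairMass, ha', hb', mul_nonneg ha₀ (hμ.1 _), mul_nonneg hb₀ (hν.1 _)]
  · cases same <;> simp [Fintype.sum_option, sbmPairMass, ← mul_sum, hμ.2, hν.2]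

lemma eventually_isProbVec_sbmPairMass (ha : 0 ≤ a) (hb : 0 ≤ b) (hμ : IsProbVec μ)
    (hν : IsProbVec ν) :
    ∀ᶠ n : ℕ in atTop, ∀ same, IsProbVec (sbmPairMass n a b μ ν same) := by
  filter_upwards [tendsto_natCast_atTop_atTop.eventually_ge_atTop a,
    tendsto_natCast_atTop_atTop.eventually_ge_atTop b] with n han hbn
  exact isProbVec_sbmPairMass ha hb han hbn hμ hν

lemma erMass_eq_tiltedMass (f : Option L → ℝ) :
    erMass n a b μ ν = tiltedMass (erPairMass n a b μ ν) f 0 := by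
  ext E
  simp [erMass, tiltedMass]

variable (hP : ∀ same, IsProbVec (sbmPairMass n a b μ ν same)) (hab : a + b ≠ 0)

include hP in
lemma abs_pairScore_le_one (x : Option L) : |pairScore n a b μ ν x| ≤ 1 :=
  abs_score_le_one (hP true).1 (hP false).1 x

include hP in
lemma sbmMass_nonneg : 0 ≤ sbmMass n a b μ ν := fun _ =>
  mul_nonneg (by positivity) (prod_nonneg fun _ _ => (hP _).1 _)

include hP in
lemma sbmGraphProb_nonneg (A : Set (EdgeConf n L)) : 0 ≤ sbmGraphProb n a b μ ν A :=
  sum_nonneg fun _ _ => Set.indicator_nonneg (fun x _ => sbmMass_nonneg hP x) _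

include hP hab

lemma erPairMass_nonneg : 0 ≤ erPairMass n a b μ ν :=
  erPairMass_eq_avgMass (μ := μ) (ν := ν) hab ▸ avgMass_nonneg (hP true).1 (hP false).1

lemma erMass_nonneg : 0 ≤ erMass n a b μ ν := fun _ =>
  prod_nonneg fun _ _ => erPairMass_nonneg hP hab _

lemma erProb_nonneg (A : Set (EdgeConf n L)) : 0 ≤ erProb n a b μ ν A :=
  sum_nonneg fun _ _ => Set.indicator_nonneg (fun x _ => erMass_nonneg hP hab x) _

lemma moment_pairScore_zero : moment (erPairMass n a b μ ν) (pairScore n a b μ ν) 0 = 1 := by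
  rw [erPairMass_eq_avgMass hab]
  exact moment_avgMass_score_zero (hP true) (hP false)

lemma moment_pairScore_one : moment (erPairMass n a b μ ν) (pairScore n a b μ ν) 1 = 0 := by
  rw [erPairMass_eq_avgMass hab]
  exact moment_avgMass_score_one (hP true) (hP false)

lemma sbmPairMass_eq (same : Bool) (x : Option L) :
    sbmPairMass n a b μ ν same x =
      erPairMass n a b μ ν x * (1 + (if same then 1 else -1) * pairScore n a b μ ν x) := by
  have h := avgMass_mul_score (hP true).1 (hP false).1 x
  rw [erPairMass_eq_avgMass hab, pairScore, mul_add, mul_left_comm, h, avgMass]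
  cases same
  · rw [if_neg Bool.false_ne_true]
    ring
  · rw [if_pos rfl]
    ring

lemma moment_pairScore_two :
    moment (erPairMass n a b μ ν) (pairScore n a b μ ν) 2 =
      ((b - a) / n) ^ 2 / (2 * (2 - (a + b) / n)) + tau a b μ ν / n := by
  have hlabel : ∀ u v : ℝ, (u / n) ^ 2 / (2 * (v / n)) = u ^ 2 / (2 * v) / n := by
    intro u v
    obtain hn | hn := eq_or_ne (n : ℝ) 0
    · simp [hn]
    obtain rfl | hv := eq_or_ne v 0
    · simp
    field_simp
  rw [erPairMass_eq_avgMass hab, pairScore, moment_avgMass_score_two (hP true).1 (hP false).1,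
    Fintype.sum_option, tau, sum_div]
  simp only [sbmPairMass, if_true, Bool.false_eq_true, if_false]
  congr 1
  · congr 2 <;> ring
  · refine sum_congr rfl fun ℓ _ => ?_
    rw [← hlabel, sub_div, add_div, mul_div_right_comm, mul_div_right_comm b]

lemma tau_div_le_moment_pairScore_two :
    tau a b μ ν / n ≤ moment (erPairMass n a b μ ν) (pairScore n a b μ ν) 2 := by
  have ha : 0 ≤ 1 - a / n := (hP true).1 none
  have hb : 0 ≤ 1 - b / n := (hP false).1 none
  rw [moment_pairScore_two hP hab, le_add_iff_nonneg_left, add_div]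
  exact div_nonneg (sq_nonneg _) (by linarith)

lemma moment_pairScore_two_le (hn : a + b ≤ n) (hn' : (b - a) ^ 2 ≤ n) :
    moment (erPairMass n a b μ ν) (pairScore n a b μ ν) 2 ≤ (tau a b μ ν + 1) / n := by
  have hden : (1 : ℝ) ≤ 2 * (2 - (a + b) / n) := by
    linarith [div_le_one_of_le₀ hn n.cast_nonneg]
  have hnone : ((b - a) / n) ^ 2 / (2 * (2 - (a + b) / n)) ≤ 1 / n :=
    calc ((b - a) / n) ^ 2 / (2 * (2 - (a + b) / n)) ≤ ((b - a) / n) ^ 2 :=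
          div_le_self (sq_nonneg _) hden
      _ ≤ n / (n : ℝ) ^ 2 := by rw [div_pow]; gcongr
      _ = 1 / n := by rw [sq, div_self_mul_self', one_div]
  rw [moment_pairScore_two hP hab, add_div (tau a b μ ν), add_comm]
  exact add_le_add_right hnone _

lemma sum_sbmMass_mul (g : EdgeConf n L → ℝ) :
    ∑ x, sbmMass n a b μ ν x * g x.2 = 𝔼 σ : Fin n → Bool, ∑ E : EdgeConf n L,
      tiltedMass (erPairMass n a b μ ν) (pairScore n a b μ ν) (pairSign σ) E * g E := by
  have hmass : ∀ σ E, sbmMass n a b μ ν (σ, E) =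
      (1 / 2) ^ n * tiltedMass (erPairMass n a b μ ν) (pairScore n a b μ ν) (pairSign σ) E := by
    intro σ E
    simp only [sbmMass, sbmPairMass_eq hP hab, tiltedMass, pairSign_eq_ite]
  simp only [Fintype.sum_prod_type, hmass, mul_assoc, ← mul_sum, Fintype.expect_eq_sum_div_card]
  rw [Fintype.card_fun, Fintype.card_bool, Fintype.card_fin, Nat.cast_pow, Nat.cast_two,
    one_div_pow, one_div_mul_eq_div]

lemma sum_sbmMass : ∑ x, sbmMass n a b μ ν x = 1 := by
  simpa [sum_tiltedMass (moment_pairScore_zero hP hab) (moment_pairScore_one hP hab)] using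
    sum_sbmMass_mul hP hab fun _ => 1

lemma one_sub_sbmGraphProb (A : Set (EdgeConf n L)) :
    1 - sbmGraphProb n a b μ ν A = sbmGraphProb n a b μ ν Aᶜ := by
  have hsplit : sbmGraphProb n a b μ ν A + sbmGraphProb n a b μ ν Aᶜ = 1 := by
    rw [sbmGraphProb, sbmGraphProb, sbmProb, sbmProb, ← sum_add_distrib, ← sum_sbmMass hP hab]
    exact sum_congr rfl fun x _ => Set.indicator_self_add_compl_apply {x | x.2 ∈ A} _ x
  linarith

end Models

section Testing

variable {n k : ℕ} {a b : ℝ} {μ ν : L → ℝ} [Fintype L]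

/-- The sum of the type I and type II errors of the test which decides for the block model against
the Erdős–Rényi graph on the event `A`. -/
noncomputable def testingError (n : ℕ) (a b : ℝ) (μ ν : L → ℝ) (A : Set (EdgeConf n L)) : ℝ :=
  erProb n a b μ ν A + (1 - sbmGraphProb n a b μ ν A)

/-- The event that the statistic `cycleStat k` is at least half of its mean in the block model. -/
def cycleEvent (k n : ℕ) [Fact (2 < k)] (a b : ℝ) (μ ν : L → ℝ) : Set (EdgeConf n L) :=
  {E | cycleMean k n (erPairMass n a b μ ν) (pairScore n a b μ ν) / 2 ≤
    cycleStat k (pairScore n a b μ ν) E}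

variable (hP : ∀ same, IsProbVec (sbmPairMass n a b μ ν same)) (hab : a + b ≠ 0)

include hP hab

lemma erProb_le_testingError (A : Set (EdgeConf n L)) :
    erProb n a b μ ν A ≤ testingError n a b μ ν A := by
  rw [testingError, one_sub_sbmGraphProb hP hab]
  exact le_add_of_nonneg_right (sbmGraphProb_nonneg hP _)

lemma one_sub_testingError_le_sbmGraphProb (A : Set (EdgeConf n L)) :
    1 - testingError n a b μ ν A ≤ sbmGraphProb n a b μ ν A := by
  rw [testingError]
  linarith [erProb_nonneg hP hab A]

lemma sbmGraphProb_le_one (A : Set (EdgeConf n L)) : sbmGraphProb n a b μ ν A ≤ 1 := by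
  rw [← sub_nonneg, one_sub_sbmGraphProb hP hab]
  exact sbmGraphProb_nonneg hP _

variable [Fact (2 < k)]

lemma erProb_cycleEvent_le
    (hM₀ : 0 < cycleMean k n (erPairMass n a b μ ν) (pairScore n a b μ ν)) :
    erProb n a b μ ν (cycleEvent k n a b μ ν) ≤
      4 * (k ^ 2 / cycleMean k n (erPairMass n a b μ ν) (pairScore n a b μ ν)) := by
  set M := cycleMean k n (erPairMass n a b μ ν) (pairScore n a b μ ν)
  have hdev : ∀ E ∈ cycleEvent k n a b μ ν, M / 2 ≤ |cycleStat k (pairScore n a b μ ν) E - 0| :=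
    fun E hE => by
      rw [sub_zero]
      exact le_trans hE (le_abs_self _)
  have hsecond := sum_tiltedMass_zero_mul_cycleStat_sq_le (k := k) (n := n)
    (erPairMass_nonneg hP hab) (moment_pairScore_zero hP hab) (moment_pairScore_one hP hab)
  calc erProb n a b μ ν (cycleEvent k n a b μ ν)
      ≤ (∑ E, erMass n a b μ ν E * (cycleStat k (pairScore n a b μ ν) E - 0) ^ 2) / (M / 2) ^ 2 :=
        sum_indicator_le_of_le_abs_sub (erMass_nonneg hP hab) _ 0 (half_pos hM₀) hdev
    _ ≤ k ^ 2 * M / (M / 2) ^ 2 := by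
        simp only [sub_zero, erMass_eq_tiltedMass (pairScore n a b μ ν)]
        gcongr
    _ = 4 * (k ^ 2 / M) := by
        field_simp
        norm_num

lemma sbmGraphProb_compl_cycleEvent_le
    (hM₀ : 0 < cycleMean k n (erPairMass n a b μ ν) (pairScore n a b μ ν)) {B : ℝ} (hB : 1 ≤ B)
    (htB : moment (erPairMass n a b μ ν) (pairScore n a b μ ν) 2 ≤ B / n) :
    sbmGraphProb n a b μ ν (cycleEvent k n a b μ ν)ᶜ ≤
      8 * (k ^ 2 / cycleMean k n (erPairMass n a b μ ν) (pairScore n a b μ ν)) +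
        4 * (2 ^ k * (Cycle.overlapBound k B / n) /
          cycleMean k n (erPairMass n a b μ ν) (pairScore n a b μ ν) ^ 2) := by
  set M := cycleMean k n (erPairMass n a b μ ν) (pairScore n a b μ ν)
  have hdev : ∀ x ∈ {x : (Fin n → Bool) × EdgeConf n L | x.2 ∈ (cycleEvent k n a b μ ν)ᶜ},
      M / 2 ≤ |cycleStat k (pairScore n a b μ ν) x.2 - M| := fun x hx => by
    have hlt : cycleStat k (pairScore n a b μ ν) x.2 < M / 2 := not_le.1 hx
    rw [abs_sub_comm]
    exact le_trans (by linarith) (le_abs_self _)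
  have hvar := expect_sum_tiltedMass_mul_sub_sq_le (k := k) (n := n) (erPairMass_nonneg hP hab)
    (abs_pairScore_le_one hP) (moment_pairScore_zero hP hab) (moment_pairScore_one hP hab) hB htB
  calc sbmGraphProb n a b μ ν (cycleEvent k n a b μ ν)ᶜ
      ≤ (∑ x, sbmMass n a b μ ν x * (cycleStat k (pairScore n a b μ ν) x.2 - M) ^ 2) /
          (M / 2) ^ 2 :=
        sum_indicator_le_of_le_abs_sub (sbmMass_nonneg hP) _ M (half_pos hM₀) hdev
    _ ≤ (2 * k ^ 2 * M + 2 ^ k * (Cycle.overlapBound k B / n)) / (M / 2) ^ 2 := by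
        rw [← sum_sbmMass_mul hP hab
          fun E => (cycleStat k (pairScore n a b μ ν) E - M) ^ 2] at hvar
        gcongr
    _ = 8 * (k ^ 2 / M) + 4 * (2 ^ k * (Cycle.overlapBound k B / n) / M ^ 2) := by
        field_simp
        ring

lemma tau_pow_div_two_le_cycleMean (hτ : 0 ≤ tau a b μ ν) (hn₀ : n ≠ 0) (hn : 2 * k ^ 2 ≤ n) :
    tau a b μ ν ^ k / 2 ≤ cycleMean k n (erPairMass n a b μ ν) (pairScore n a b μ ν) :=
  calc tau a b μ ν ^ k / 2 = n ^ k / 2 * (tau a b μ ν / n) ^ k := by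
        rw [div_pow]
        field_simp
    _ ≤ cycleMean k n (erPairMass n a b μ ν) (pairScore n a b μ ν) :=
        mul_le_mul (Cycle.half_pow_le_card hn)
          (pow_le_pow_left₀ (by positivity) (tau_div_le_moment_pairScore_two hP hab) k)
          (by positivity) (Nat.cast_nonneg _)

lemma testingError_cycleEvent_le (hτ : 1 ≤ tau a b μ ν) (hn₀ : n ≠ 0) (hn : 2 * k ^ 2 ≤ n)
    (habn : a + b ≤ n) (habn' : (b - a) ^ 2 ≤ n) :
    testingError n a b μ ν (cycleEvent k n a b μ ν) ≤ 24 * (k ^ 2 / tau a b μ ν ^ k) +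
      16 * (2 ^ k * (Cycle.overlapBound k (tau a b μ ν + 1) / n)) := by
  set τ := tau a b μ ν
  set M := cycleMean k n (erPairMass n a b μ ν) (pairScore n a b μ ν)
  have hτk : 1 ≤ τ ^ k := one_le_pow₀ hτ
  have hτM : τ ^ k / 2 ≤ M := tau_pow_div_two_le_cycleMean hP hab (by positivity) hn₀ hn
  have hM₀ : 0 < M := by linarith
  have hinv : k ^ 2 / M ≤ 2 * (k ^ 2 / τ ^ k) :=
    calc (k ^ 2 : ℝ) / M ≤ k ^ 2 / (τ ^ k / 2) := by gcongr
      _ = 2 * (k ^ 2 / τ ^ k) := by rw [div_div_eq_mul_div, mul_comm, mul_div_assoc]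
  have hoverlap : 0 ≤ 2 ^ k * (Cycle.overlapBound k (τ + 1) / n) := by
    unfold Cycle.overlapBound
    positivity
  have hinv' : 2 ^ k * (Cycle.overlapBound k (τ + 1) / n) / M ^ 2 ≤
      4 * (2 ^ k * (Cycle.overlapBound k (τ + 1) / n)) := by
    rw [div_le_iff₀ (by positivity), mul_right_comm]
    exact le_mul_of_one_le_left hoverlap (by nlinarith)
  have hER := erProb_cycleEvent_le hP hab hM₀
  have hSBM := sbmGraphProb_compl_cycleEvent_le hP hab hM₀ (by linarith : 1 ≤ τ + 1)
    (moment_pairScore_two_le hP hab habn habn')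
  rw [testingError, one_sub_sbmGraphProb hP hab]
  linarith

end Testing

lemma eventually_exists_testingError_le [Fintype L] {a b : ℝ} {μ ν : L → ℝ} (ha : 0 < a)
    (hb : 0 < b) (hμ : IsProbVec μ) (hν : IsProbVec ν) (hτ : 1 < tau a b μ ν) {ε : ℝ} (hε : 0 < ε) :
    ∀ᶠ n : ℕ in atTop, ∃ A, testingError n a b μ ν A ≤ ε := by
  have hlim_k : Tendsto (fun k : ℕ => 24 * ((k : ℝ) ^ 2 / tau a b μ ν ^ k)) atTop (nhds 0) := by
    simpa using (tendsto_pow_const_div_const_pow_of_one_lt 2 hτ).const_mul 24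
  obtain ⟨k, hk, hk₂⟩ :=
    ((hlim_k.eventually_le_const (half_pos hε)).and (eventually_gt_atTop 2)).exists
  have : Fact (2 < k) := ⟨hk₂⟩
  have hlim_n : Tendsto (fun n : ℕ =>
      16 * (2 ^ k * (Cycle.overlapBound k (tau a b μ ν + 1) / n))) atTop (nhds 0) := by
    simpa using
      ((tendsto_const_div_atTop_nhds_zero_nat (Cycle.overlapBound k (tau a b μ ν + 1))).const_mul
        (2 ^ k)).const_mul 16
  have hcast := tendsto_natCast_atTop_atTop (R := ℝ)
  filter_upwards [eventually_isProbVec_sbmPairMass ha.le hb.le hμ hν, eventually_ne_atTop 0,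
    eventually_ge_atTop (2 * k ^ 2), hcast.eventually_ge_atTop (a + b),
    hcast.eventually_ge_atTop ((b - a) ^ 2), hlim_n.eventually_le_const (half_pos hε)]
    with n hP hn₀ hn habn habn' hoverlap
  refine ⟨cycleEvent k n a b μ ν, ?_⟩
  linarith [testingError_cycleEvent_le (k := k) hP (add_pos ha hb).ne' hτ.le hn₀ hn habn habn']

/-- **Theorem (Orthogonality, Theorem 6, first part).**
If `τ > 1`, then the labeled SBM distribution `ℙ_n` and the labeled Erdős–Rényi
distribution `ℙ'_n` are asymptotically orthogonal: there are events `A_n` with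
`ℙ_n(A_n) → 1` and `ℙ'_n(A_n) → 0`. -/
theorem sbm_er_orthogonal
    {L : Type*} [Fintype L] (a b : ℝ) (ha : 0 < a) (hb : 0 < b)
    (μ ν : L → ℝ) (hμ : IsProbVec μ) (hν : IsProbVec ν)
    (htau : 1 < tau a b μ ν) :
    ∃ A : (n : ℕ) → Set (EdgeConf n L),
      Filter.Tendsto (fun n : ℕ => sbmGraphProb n a b μ ν (A n))
        Filter.atTop (nhds 1) ∧
      Filter.Tendsto (fun n : ℕ => erProb n a b μ ν (A n))
        Filter.atTop (nhds 0) := by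
  have hab : a + b ≠ 0 := (add_pos ha hb).ne'
  have hP := eventually_isProbVec_sbmPairMass ha.le hb.le hμ hν
  obtain ⟨A, hA⟩ := exists_tendsto_zero_of_eventually_exists_le
    (F := fun n => testingError n a b μ ν)
    (hP.mono fun n hP A => (erProb_nonneg hP hab A).trans (erProb_le_testingError hP hab A))
    fun ε hε => eventually_exists_testingError_le ha hb hμ hν htau hε
  refine ⟨A, ?_, ?_⟩
  · have hlower : Tendsto (fun n => 1 - testingError n a b μ ν (A n)) atTop (nhds 1) := by
      simpa using hA.const_sub 1
    exact tendsto_of_tendsto_of_tendsto_of_le_of_le' hlower tendsto_const_nhds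
      (hP.mono fun n hP => one_sub_testingError_le_sbmGraphProb hP hab (A n))
      (hP.mono fun n hP => sbmGraphProb_le_one hP hab (A n))
  · exact squeeze_zero' (hP.mono fun n hP => erProb_nonneg hP hab (A n))
      (hP.mono fun n hP => erProb_le_testingError hP hab (A n)) hA

end LSBM
end

section
/- Let ℙ'_n denote the distribution of the labeled Erdős–Rényi graph 𝒢(n, (a+b)/2). For any fixed integer m ≥ 3, under ℙ'_n the family of random variables {X_n([ℓ]_k) : [ℓ]_k ∈ 𝓛^k, 3 ≤ k ≤ m} converges jointly in distribution, as n → ∞, to a family of independent Poisson random variables, where the limit variable corresponding to [ℓ]_k = (ℓ₁,…,ℓ_k) has mean λ([ℓ]_k) = (1/(2^{k+1}·k))·∏_{i=1}^k (a·μ(ℓ_i) + b·ν(ℓ_i)). -/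
open Finset Filter Real

namespace LSBM

variable {L : Type*}

/-! Since the edges are independent, the occurrences of labelled cycles are dissociated events: each
is jointly independent of the occurrences of all cycles that share no edge with it. The Chen–Stein
method thus yields an approximate Stein equation for each coordinate of the vector `X` of cycle
counts, with error `b₁ + b₂`. An edge costs a factor `O(1 / n)` and a vertex gains a factor `n`, so
this error is `O(1 / n)`, because the union of two distinct cycles sharing an edge has more edges
than vertices.

Tested against powers of `1 - s`, the Stein equations become an approximate differential equation
for `s ↦ 𝔼 [(1 - s) ^ ∑ t, X t]`, whose value at `s = 1` is `ℙ (X = 0)`. Tested against point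
masses, they become an approximate form of the recursion
`(j t + 1) ℙ (X = j + e_t) = λ t ℙ (X = j)`, which yields the remaining probabilities. -/

/-! ### The Chen–Stein method on a finite probability space -/

section ChenStein

variable {Ω A M T : Type*}

/-- The random variable `∑ α ∈ B, 1_{s α} v α`, the sum of the values `v α` over those `α ∈ B`
whose event occurs. -/
noncomputable def occurrenceSum [AddCommMonoid M] (s : A → Set Ω) (v : A → M) (B : Finset A)
    (ω : Ω) : M :=
  ∑ α ∈ B, (s α).indicator (fun _ => v α) ω

section OccurrenceSum

variable [DecidableEq A] [AddCommMonoid M] {s : A → Set Ω} {ω : Ω}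

theorem occurrenceSum_univ_of_mem [Fintype A] (v : A → M) {α : A} (hω : ω ∈ s α) :
    occurrenceSum s v univ ω = occurrenceSum s v (univ.erase α) ω + v α := by
  rw [occurrenceSum, ← Finset.sum_erase_add univ _ (mem_univ α), Set.indicator_of_mem hω,
    occurrenceSum]

theorem abs_apply_occurrenceSum_sub_le {g : M → ℝ} (hg : ∀ x, |g x| ≤ 1) (v : A → M)
    {B B' : Finset A} (hB : B ⊆ B') (ω : Ω) :
    |g (occurrenceSum s v B' ω) - g (occurrenceSum s v B ω)| ≤
      ∑ β ∈ B' \ B, 2 * (s β).indicator (1 : Ω → ℝ) ω := by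
  have nonneg (β) : 0 ≤ 2 * (s β).indicator (1 : Ω → ℝ) ω :=
    mul_nonneg zero_le_two (Set.indicator_nonneg (fun _ _ => zero_le_one) ω)
  by_cases h : ∃ β ∈ B' \ B, ω ∈ s β
  · obtain ⟨β, hβ, hω⟩ := h
    calc |g (occurrenceSum s v B' ω) - g (occurrenceSum s v B ω)|
      _ ≤ 1 + 1 := (abs_sub _ _).trans (add_le_add (hg _) (hg _))
      _ = 2 * (s β).indicator (1 : Ω → ℝ) ω := by rw [Set.indicator_of_mem hω]; norm_num
      _ ≤ _ := Finset.single_le_sum (fun β _ => nonneg β) hβ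
  · push Not at h
    have : occurrenceSum s v B' ω = occurrenceSum s v B ω := by
      rw [occurrenceSum, ← Finset.sum_sdiff hB,
        Finset.sum_eq_zero fun β hβ => Set.indicator_of_notMem (h β hβ) _, zero_add, occurrenceSum]
    rw [this, sub_self, abs_zero]
    exact Finset.sum_nonneg fun β _ => nonneg β

end OccurrenceSum

variable [Fintype Ω]

/-- The total weight of the event `s`. Together with `IsProbVec w` this makes `w : Ω → ℝ` a finite
probability space, in which the expectation of `f` is written `w ⬝ᵥ f`. -/
noncomputable def prob (w : Ω → ℝ) (s : Set Ω) : ℝ := ∑ ω, s.indicator w ω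

theorem dotProduct_indicator_one (w : Ω → ℝ) (s : Set Ω) : w ⬝ᵥ s.indicator 1 = prob w s := by
  classical simp [dotProduct, prob, Set.indicator_apply]

theorem prob_nonneg {w : Ω → ℝ} (hw : ∀ ω, 0 ≤ w ω) (s : Set Ω) : 0 ≤ prob w s :=
  Finset.sum_nonneg fun ω _ => Set.indicator_nonneg (fun ω _ => hw ω) ω

theorem prob_mono {w : Ω → ℝ} (hw : ∀ ω, 0 ≤ w ω) {s t : Set Ω} (hst : s ⊆ t) :
    prob w s ≤ prob w t :=
  Finset.sum_le_sum fun ω _ => Set.indicator_le_indicator_of_subset hst hw ω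

theorem dotProduct_mono {w f g : Ω → ℝ} (hw : ∀ ω, 0 ≤ w ω) (hfg : ∀ ω, f ω ≤ g ω) :
    w ⬝ᵥ f ≤ w ⬝ᵥ g :=
  Finset.sum_le_sum fun ω _ => mul_le_mul_of_nonneg_left (hfg ω) (hw ω)

theorem abs_dotProduct_sub_le {w f g e : Ω → ℝ} (hw : ∀ ω, 0 ≤ w ω)
    (hfg : ∀ ω, |f ω - g ω| ≤ e ω) : |w ⬝ᵥ f - w ⬝ᵥ g| ≤ w ⬝ᵥ e := by
  rw [← dotProduct_sub, abs_le, ← dotProduct_neg]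
  exact ⟨dotProduct_mono hw fun ω => (abs_le.1 (hfg ω)).1,
    dotProduct_mono hw fun ω => (abs_le.1 (hfg ω)).2⟩

theorem dotProduct_indicator_sum (w : Ω → ℝ) (u : Set Ω) (s : A → Set Ω) (B : Finset A) (c : ℝ) :
    w ⬝ᵥ u.indicator (fun ω => ∑ β ∈ B, c * (s β).indicator 1 ω) =
      c * ∑ β ∈ B, prob w (u ∩ s β) := by
  have : u.indicator (fun ω => ∑ β ∈ B, c * (s β).indicator 1 ω) =
      c • ∑ β ∈ B, (u ∩ s β).indicator (1 : Ω → ℝ) := by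
    ext ω
    by_cases hω : ω ∈ u <;> simp [hω, Set.inter_indicator_one, Finset.mul_sum]
  rw [this, dotProduct_smul, dotProduct_sum, smul_eq_mul]
  simp only [dotProduct_indicator_one]

/-- The events `s α` are dissociated with dependency neighbourhoods `D α`: every function of the
events outside `D α` is uncorrelated with `s α`. -/
structure IsDissociated (w : Ω → ℝ) (s : A → Set Ω) (D : A → Finset A) : Prop where
  mem_self : ∀ α, α ∈ D α
  dotProduct_indicator : ∀ (α) (g : Ω → ℝ),
    (∀ x y, (∀ β ∉ D α, (x ∈ s β ↔ y ∈ s β)) → g x = g y) →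
      w ⬝ᵥ (s α).indicator g = prob w (s α) * w ⬝ᵥ g

variable [DecidableEq A]

/-- The contribution of `α` to `chenSteinError`. -/
noncomputable def localError (w : Ω → ℝ) (s : A → Set Ω) (D : A → Finset A) (α : A) : ℝ :=
  ∑ β ∈ D α, prob w (s α) * prob w (s β) + ∑ β ∈ (D α).erase α, prob w (s α ∩ s β)

/-- The sum `b₁ + b₂` of the two error terms in the Chen–Stein method of Arratia, Goldstein and
Gordon; their third term vanishes for dissociated events. -/
noncomputable def chenSteinError [Fintype A] (w : Ω → ℝ) (s : A → Set Ω) (D : A → Finset A) : ℝ :=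
  ∑ α, localError w s D α

/-- Each coordinate of the random vector `X` satisfies the Stein equation of a Poisson variable of
mean `lam t`, up to an error `ε`, against all test functions bounded by one. -/
def IsSteinApprox [DecidableEq T] (w : Ω → ℝ) (X : Ω → T → ℕ) (lam : T → ℝ) (ε : ℝ) : Prop :=
  ∀ h : (T → ℕ) → ℝ, (∀ x, |h x| ≤ 1) → ∀ t,
    |w ⬝ᵥ (fun ω => X ω t * h (X ω)) - lam t * w ⬝ᵥ (fun ω => h (X ω + Pi.single t 1))| ≤ ε

variable {w : Ω → ℝ} {s : A → Set Ω} {D : A → Finset A}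

theorem localError_nonneg (hw : ∀ ω, 0 ≤ w ω) (α : A) : 0 ≤ localError w s D α :=
  add_nonneg (Finset.sum_nonneg fun _ _ => mul_nonneg (prob_nonneg hw _) (prob_nonneg hw _))
    (Finset.sum_nonneg fun _ _ => prob_nonneg hw _)

theorem abs_dotProduct_indicator_sub_le [AddCommMonoid M] (hw : ∀ ω, 0 ≤ w ω) {g : M → ℝ}
    (hg : ∀ x, |g x| ≤ 1) (v : A → M) {B B' : Finset A} (hB : B ⊆ B') (u : Set Ω) :
    |w ⬝ᵥ u.indicator (fun ω => g (occurrenceSum s v B' ω)) -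
        w ⬝ᵥ u.indicator (fun ω => g (occurrenceSum s v B ω))| ≤
      2 * ∑ β ∈ B' \ B, prob w (u ∩ s β) := by
  rw [← dotProduct_indicator_sum]
  refine abs_dotProduct_sub_le hw fun ω => ?_
  by_cases hω : ω ∈ u
  · simpa only [Set.indicator_of_mem hω] using abs_apply_occurrenceSum_sub_le hg v hB ω
  · simp only [Set.indicator_of_notMem hω, sub_self, abs_zero, le_refl]

theorem IsDissociated.abs_dotProduct_sub_le_localError [Fintype A] [AddCommMonoid M]
    (hD : IsDissociated w s D) (hw : ∀ ω, 0 ≤ w ω) {h : M → ℝ} (hh : ∀ x, |h x| ≤ 1) (v : A → M)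
    (α : A) :
    |w ⬝ᵥ (s α).indicator (fun ω => h (occurrenceSum s v univ ω)) -
        prob w (s α) * w ⬝ᵥ (fun ω => h (occurrenceSum s v univ ω + v α))| ≤
      2 * localError w s D α := by
  set X := occurrenceSum s v univ
  set Y := occurrenceSum s v (D α)ᶜ
  have hshift (x : M) : |h (x + v α)| ≤ 1 := hh _
  have overlap : |w ⬝ᵥ (s α).indicator (fun ω => h (X ω)) -
      w ⬝ᵥ (s α).indicator (fun ω => h (Y ω + v α))| ≤
        2 * ∑ β ∈ (D α).erase α, prob w (s α ∩ s β) := by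
    have hsub : (D α)ᶜ ⊆ univ.erase α := by
      rw [← compl_singleton, compl_subset_compl, singleton_subset_iff]
      exact hD.mem_self α
    have hX : (s α).indicator (fun ω => h (X ω)) =
        (s α).indicator fun ω => h (occurrenceSum s v (univ.erase α) ω + v α) :=
      Set.indicator_congr fun ω hω => by rw [← occurrenceSum_univ_of_mem v hω]
    have hdiff : (D α).erase α = univ.erase α \ (D α)ᶜ := by ext; simp
    rw [hX, hdiff]
    exact abs_dotProduct_indicator_sub_le hw hshift v hsub (s α)
  have independence : w ⬝ᵥ (s α).indicator (fun ω => h (Y ω + v α)) =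
      prob w (s α) * w ⬝ᵥ (fun ω => h (Y ω + v α)) := by
    refine hD.dotProduct_indicator α _ fun x y hxy => ?_
    have : Y x = Y y := Finset.sum_congr rfl fun β hβ => by
      classical simp only [Set.indicator_apply, hxy β (mem_compl.1 hβ)]
    rw [this]
  have removal : |w ⬝ᵥ (fun ω => h (Y ω + v α)) - w ⬝ᵥ (fun ω => h (X ω + v α))| ≤
      2 * ∑ β ∈ D α, prob w (s β) := by
    rw [abs_sub_comm]
    simpa using abs_dotProduct_indicator_sub_le hw hshift v (subset_univ (D α)ᶜ) Set.univ
  calc _ ≤ _ := abs_sub_le _ _ _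
    _ ≤ 2 * ∑ β ∈ (D α).erase α, prob w (s α ∩ s β) +
          prob w (s α) * (2 * ∑ β ∈ D α, prob w (s β)) := by
      refine add_le_add overlap ?_
      rw [independence, ← mul_sub, abs_mul, abs_of_nonneg (prob_nonneg hw _)]
      exact mul_le_mul_of_nonneg_left removal (prob_nonneg hw _)
    _ = 2 * localError w s D α := by rw [localError, ← Finset.mul_sum]; ring

theorem IsDissociated.isSteinApprox [Fintype A] [DecidableEq T] (hD : IsDissociated w s D)
    (hw : ∀ ω, 0 ≤ w ω) (τ : A → T) :
    IsSteinApprox w (occurrenceSum s (fun α => Pi.single (τ α) 1) univ)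
      (fun t => ∑ α with τ α = t, prob w (s α)) (2 * chenSteinError w s D) := by
  intro h hh t
  set v : A → T → ℕ := fun α => Pi.single (τ α) 1
  set X := occurrenceSum s v univ
  have hX : (fun ω => (X ω t : ℝ) * h (X ω)) =
      ∑ α with τ α = t, (s α).indicator fun ω => h (X ω) := by
    ext ω
    have hcoord : (X ω t : ℝ) = ∑ α with τ α = t, (s α).indicator 1 ω := by
      classical
      simp only [X, v, occurrenceSum, Finset.sum_apply, Finset.sum_filter, Set.indicator_apply]
      push_cast
      refine Finset.sum_congr rfl fun α _ => ?_
      by_cases hα : τ α = t <;> by_cases hω : ω ∈ s α <;> simp [hα, hω]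
    classical
    rw [hcoord, Finset.sum_mul, Finset.sum_apply]
    exact Finset.sum_congr rfl fun α _ => by simp [Set.indicator_apply]
  rw [hX, dotProduct_sum, Finset.sum_mul, ← Finset.sum_sub_distrib]
  calc _ ≤ ∑ α with τ α = t, 2 * localError w s D α := by
        refine (Finset.abs_sum_le_sum_abs _ _).trans (Finset.sum_le_sum fun α hα => ?_)
        have := hD.abs_dotProduct_sub_le_localError hw hh v α
        rwa [show v α = Pi.single t 1 by rw [← (mem_filter.1 hα).2]] at this
    _ ≤ ∑ α, 2 * localError w s D α :=
        Finset.sum_le_sum_of_subset_of_nonneg (filter_subset _ _) fun α _ _ =>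
          mul_nonneg zero_le_two (localError_nonneg hw α)
    _ = 2 * chenSteinError w s D := by rw [← Finset.mul_sum, chenSteinError]

end ChenStein

/-! ### Poisson limits from approximate Stein equations -/

section PoissonLimit

variable {Ω T : Type*}

theorem abs_sub_exp_neg_mul_le {f f' : ℝ → ℝ} {a δ : ℝ} (ha : 0 ≤ a)
    (hf : ∀ s ∈ Set.Icc (0 : ℝ) 1, HasDerivAt f (f' s) s)
    (hδ : ∀ s ∈ Set.Icc (0 : ℝ) 1, |f' s + a * f s| ≤ δ) : |f 1 - exp (-a) * f 0| ≤ δ := by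
  set g : ℝ → ℝ := fun s => exp (a * s) * f s
  have hg (s) (hs : s ∈ Set.Icc (0 : ℝ) 1) :
      HasDerivAt g (exp (a * s) * (f' s + a * f s)) s := by
    refine (((hasDerivAt_id s).const_mul a).exp.mul (hf s hs)).congr_deriv ?_
    simp only [id, mul_one]
    ring
  have hg' (s) (hs : s ∈ Set.Icc (0 : ℝ) 1) :
      ‖exp (a * s) * (f' s + a * f s)‖ ≤ exp a * δ := by
    rw [norm_mul, norm_eq_abs, norm_eq_abs, abs_exp]
    gcongr
    exacts [mul_le_of_le_one_right ha hs.2, hδ s hs]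
  have mean_value := (convex_Icc (0 : ℝ) 1).norm_image_sub_le_of_norm_hasDerivWithin_le
    (fun s hs => (hg s hs).hasDerivWithinAt) hg' (x := 0) (y := 1) (by simp) (by simp)
  have hfactor : g 1 - g 0 = exp a * (f 1 - exp (-a) * f 0) := by
    simp only [g, mul_one, mul_zero, exp_zero, one_mul, mul_sub, ← mul_assoc, ← exp_add,
      add_neg_cancel]
  rw [hfactor, norm_mul, norm_eq_abs, norm_eq_abs, abs_exp, sub_zero, norm_one, mul_one]
    at mean_value
  exact le_of_mul_le_mul_left mean_value (exp_pos a)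

theorem succ_mul_poissonPMF_succ (r : ℝ) (j : ℕ) :
    (j + 1) * poissonPMF r (j + 1) = r * poissonPMF r j := by
  simp only [poissonPMF, Nat.factorial_succ]
  push_cast
  field_simp
  ring

variable [DecidableEq T]

section SteinApprox

variable [Fintype Ω] {w : Ω → ℝ} {X : Ω → T → ℕ} {lam : T → ℝ} {ε : ℝ}

theorem IsSteinApprox.abs_succ_mul_prob_sub_le (hX : IsSteinApprox w X lam ε) (j : T → ℕ) (t : T) :
    |(j t + 1) * prob w {ω | X ω = j + Pi.single t 1} - lam t * prob w {ω | X ω = j}| ≤ ε := by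
  classical
  have htest := hX (Set.indicator {j + Pi.single t 1} 1)
    (fun x => by by_cases hx : x = j + Pi.single t 1 <;> simp [hx]) t
  have hleft : (fun ω => (X ω t : ℝ) * Set.indicator {j + Pi.single t 1} 1 (X ω)) =
      ((j t : ℝ) + 1) • Set.indicator {ω | X ω = j + Pi.single t 1} 1 := by
    ext ω
    by_cases hω : X ω = j + Pi.single t 1 <;> simp [hω]
  have hright : (fun ω => Set.indicator {j + Pi.single t 1} (1 : (T → ℕ) → ℝ)
      (X ω + Pi.single t 1)) = Set.indicator {ω | X ω = j} 1 := by
    ext ω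
    by_cases hω : X ω = j <;> simp [hω]
  rwa [hleft, hright, dotProduct_smul, smul_eq_mul, dotProduct_indicator_one,
    dotProduct_indicator_one] at htest

variable [Fintype T]

theorem IsSteinApprox.abs_sum_sub_le (hX : IsSteinApprox w X lam ε) {φ : ℕ → ℝ}
    (hφ : ∀ i, |φ i| ≤ 1) :
    |w ⬝ᵥ (fun ω => ((∑ t, X ω t : ℕ) : ℝ) * φ (∑ t, X ω t)) -
        (∑ t, lam t) * w ⬝ᵥ (fun ω => φ (∑ t, X ω t + 1))| ≤ Fintype.card T * ε := by
  have hsum (ω t) : ∑ u, (X ω + Pi.single t 1 : T → ℕ) u = ∑ u, X ω u + 1 := by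
    simp [Finset.sum_add_distrib]
  have hsplit : (fun ω => ((∑ t, X ω t : ℕ) : ℝ) * φ (∑ t, X ω t)) =
      ∑ t, fun ω => (X ω t : ℝ) * φ (∑ t, X ω t) := by
    ext ω
    simp [Finset.sum_mul]
  rw [hsplit, dotProduct_sum, Finset.sum_mul, ← Finset.sum_sub_distrib, ← nsmul_eq_mul,
    ← card_univ, ← Finset.sum_const]
  refine (Finset.abs_sum_le_sum_abs _ _).trans (Finset.sum_le_sum fun t _ => ?_)
  simpa only [hsum] using hX (fun x => φ (∑ u, x u)) (fun x => hφ _) t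

theorem hasDerivAt_dotProduct_one_sub_pow (w : Ω → ℝ) (N : Ω → ℕ) (s : ℝ) :
    HasDerivAt (fun s => w ⬝ᵥ fun ω => (1 - s) ^ N ω)
      (-(w ⬝ᵥ fun ω => N ω * (1 - s) ^ (N ω - 1))) s := by
  simp only [dotProduct, ← Finset.sum_neg_distrib, ← mul_neg]
  refine HasDerivAt.fun_sum fun ω _ => HasDerivAt.const_mul _ ?_
  simpa using ((hasDerivAt_id s).const_sub 1).fun_pow (N ω)

theorem IsSteinApprox.abs_prob_eq_zero_sub_le (hX : IsSteinApprox w X lam ε)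
    (hw : ∑ ω, w ω = 1) (hlam : ∀ t, 0 ≤ lam t) :
    |prob w {ω | X ω = 0} - exp (-∑ t, lam t)| ≤ Fintype.card T * ε := by
  set f : ℝ → ℝ := fun s => w ⬝ᵥ fun ω => (1 - s) ^ ∑ t, X ω t
  have f_zero : f 0 = 1 := by simp [f, dotProduct, hw]
  have f_one : f 1 = prob w {ω | X ω = 0} := by
    classical
    rw [← dotProduct_indicator_one]
    refine congrArg (w ⬝ᵥ ·) (funext fun ω => ?_)
    simp [Set.indicator_apply, zero_pow_eq, funext_iff]
  suffices |f 1 - exp (-∑ t, lam t) * f 0| ≤ Fintype.card T * ε by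
    rwa [f_one, f_zero, mul_one] at this
  refine abs_sub_exp_neg_mul_le (Finset.sum_nonneg fun t _ => hlam t)
    (fun s _ => hasDerivAt_dotProduct_one_sub_pow w _ s) fun s hs => ?_
  have hpow (i : ℕ) : |(1 - s) ^ (i - 1)| ≤ 1 := by
    rw [abs_pow]
    exact pow_le_one₀ (abs_nonneg _) (abs_le.2 ⟨by linarith [hs.2], by linarith [hs.1]⟩)
  rw [neg_add_eq_sub, abs_sub_comm]
  exact hX.abs_sum_sub_le hpow

end SteinApprox

variable [Fintype T]

theorem succ_mul_prod_poissonPMF_add_single (lam : T → ℝ) (j : T → ℕ) (t : T) :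
    (j t + 1) * ∏ u, poissonPMF (lam u) ((j + Pi.single t 1 : T → ℕ) u) =
      lam t * ∏ u, poissonPMF (lam u) (j u) := by
  have hne : ∏ u ∈ univ.erase t, poissonPMF (lam u) ((j + Pi.single t 1 : T → ℕ) u) =
      ∏ u ∈ univ.erase t, poissonPMF (lam u) (j u) :=
    Finset.prod_congr rfl fun u hu => by simp [ne_of_mem_erase hu]
  rw [← Finset.mul_prod_erase univ _ (mem_univ t), hne,
    ← Finset.mul_prod_erase univ (fun u => poissonPMF (lam u) (j u)) (mem_univ t), ← mul_assoc,
    ← mul_assoc, ← succ_mul_poissonPMF_succ]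
  simp

theorem tendsto_prob_of_isSteinApprox {ι : Type*} {l : Filter ι} {Ω : ι → Type*}
    [∀ n, Fintype (Ω n)] {w : ∀ n, Ω n → ℝ} {X : ∀ n, Ω n → T → ℕ} {lam : ι → T → ℝ} {ε : ι → ℝ}
    {lam₀ : T → ℝ} (hX : ∀ᶠ n in l, IsSteinApprox (w n) (X n) (lam n) (ε n))
    (hw : ∀ᶠ n in l, ∑ ω, w n ω = 1) (hlam : ∀ᶠ n in l, ∀ t, 0 ≤ lam n t)
    (hε : Tendsto ε l (nhds 0)) (hlam₀ : ∀ t, Tendsto (fun n => lam n t) l (nhds (lam₀ t)))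
    (j : T → ℕ) :
    Tendsto (fun n => prob (w n) {ω | X n ω = j}) l (nhds (∏ t, poissonPMF (lam₀ t) (j t))) := by
  induction hN : ∑ t, j t generalizing j with
  | zero =>
    obtain rfl : j = 0 := funext fun t => (Finset.sum_eq_zero_iff.1 hN) t (mem_univ t)
    have hexp : Tendsto (fun n => exp (-∑ t, lam n t)) l (nhds (exp (-∑ t, lam₀ t))) :=
      (tendsto_finsetSum _ fun t _ => hlam₀ t).neg.rexp
    have hdiff : Tendsto (fun n => prob (w n) {ω | X n ω = 0} - exp (-∑ t, lam n t)) l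
        (nhds 0) := by
      refine squeeze_zero_norm' (a := fun n => Fintype.card T * ε n) ?_
        (by simpa using hε.const_mul (Fintype.card T : ℝ))
      filter_upwards [hX, hw, hlam] with n hX hw hlam
      exact hX.abs_prob_eq_zero_sub_le hw hlam
    simpa [poissonPMF, ← exp_sum] using hdiff.add hexp
  | succ N ih =>
    obtain ⟨t, ht⟩ : ∃ t, j t ≠ 0 := by
      by_contra! hj
      simp [hj] at hN
    obtain ⟨i, rfl⟩ : ∃ i : T → ℕ, j = i + Pi.single t 1 := by
      refine ⟨j - Pi.single t 1, (tsub_add_cancel_of_le fun u => ?_).symm⟩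
      rcases eq_or_ne u t with rfl | hu <;> simp [Nat.one_le_iff_ne_zero, *]
    have hi := ih i (by simpa [Finset.sum_add_distrib] using hN)
    have hdiff : Tendsto (fun n => (i t + 1) * prob (w n) {ω | X n ω = i + Pi.single t 1} -
        lam n t * prob (w n) {ω | X n ω = i}) l (nhds 0) := by
      refine squeeze_zero_norm' ?_ hε
      filter_upwards [hX] with n hX using hX.abs_succ_mul_prob_sub_le i t
    have hpos : (i t + 1 : ℝ) ≠ 0 := by positivity
    have := (hdiff.add ((hlam₀ t).mul hi)).div_const (i t + 1 : ℝ)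
    simpa only [sub_add_cancel, zero_add, ← succ_mul_prod_poissonPMF_add_single,
      mul_div_cancel_left₀ _ hpos] using this

end PoissonLimit

/-! ### Product weights -/

section ProductWeight

variable {ι : Type*} {α : ι → Type*} [Fintype ι]

/-- The joint weights of independent coordinates, the `i`-th one having weights `q i`. -/
def prodWeight (q : ∀ i, α i → ℝ) (x : ∀ i, α i) : ℝ := ∏ i, q i (x i)

theorem prodWeight_piecewise_mul (q : ∀ i, α i → ℝ) (S : Set ι) [DecidablePred (· ∈ S)]
    (x y : ∀ i, α i) :
    prodWeight q (S.piecewise x y) * prodWeight q (S.piecewise y x) =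
      prodWeight q x * prodWeight q y := by
  simp only [prodWeight, ← Finset.prod_mul_distrib]
  refine Finset.prod_congr rfl fun i _ => ?_
  by_cases hi : i ∈ S <;> simp [hi, mul_comm]

variable [DecidableEq ι] [∀ i, Fintype (α i)] {q : ∀ i, α i → ℝ}

theorem sum_prodWeight (q : ∀ i, α i → ℝ) : ∑ x, prodWeight q x = ∏ i, ∑ o, q i o := by
  simp only [prodWeight, Finset.prod_univ_sum, Fintype.piFinset_univ]

theorem isProbVec_prodWeight (hq : ∀ i, IsProbVec (q i)) : IsProbVec (prodWeight q) :=
  ⟨fun _ => Finset.prod_nonneg fun i _ => (hq i).1 _, by simp [sum_prodWeight, (hq _).2]⟩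

theorem prodWeight_dotProduct_mul (hq : ∀ i, ∑ o, q i o = 1) {f g : (∀ i, α i) → ℝ} {S : Set ι}
    (hf : DependsOn f S) (hg : DependsOn g Sᶜ) :
    prodWeight q ⬝ᵥ (f * g) = prodWeight q ⬝ᵥ f * prodWeight q ⬝ᵥ g := by
  classical
  -- Exchanging the coordinates in `Sᶜ` of two independent copies preserves their joint law.
  have hswap : Function.Involutive fun z : (∀ i, α i) × (∀ i, α i) =>
      (S.piecewise z.1 z.2, S.piecewise z.2 z.1) := fun z => by
    ext i <;> by_cases hi : i ∈ S <;> simp [hi]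
  have hone : ∑ y, prodWeight q y = 1 := by simp [sum_prodWeight, hq]
  calc prodWeight q ⬝ᵥ (f * g)
    _ = ∑ z : (∀ i, α i) × (∀ i, α i), prodWeight q z.1 * prodWeight q z.2 * (f z.1 * g z.1) := by
      rw [Fintype.sum_prod_type]
      refine Finset.sum_congr rfl fun x _ => ?_
      simp only [← Finset.sum_mul, ← Finset.mul_sum, hone, mul_one, Pi.mul_apply]
    _ = ∑ z : (∀ i, α i) × (∀ i, α i), prodWeight q z.1 * prodWeight q z.2 * (f z.1 * g z.2) := by
      rw [← Equiv.sum_comp hswap.toPerm]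
      refine Finset.sum_congr rfl fun z _ => ?_
      have hfz : f (S.piecewise z.1 z.2) = f z.1 := hf fun i hi => Set.piecewise_eq_of_mem _ _ _ hi
      have hgz : g (S.piecewise z.1 z.2) = g z.2 :=
        hg fun i hi => Set.piecewise_eq_of_notMem _ _ _ hi
      simp only [Function.Involutive.coe_toPerm, prodWeight_piecewise_mul, hfz, hgz]
    _ = prodWeight q ⬝ᵥ f * prodWeight q ⬝ᵥ g := by
      rw [dotProduct, dotProduct, Finset.sum_mul_sum, Fintype.sum_prod_type]
      simp only [mul_mul_mul_comm]

theorem prob_prodWeight_cylinder (hq : ∀ i, ∑ o, q i o = 1) (S : Finset ι) (g : ∀ i, α i) :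
    prob (prodWeight q) {x | ∀ i ∈ S, x i = g i} = ∏ i ∈ S, q i (g i) := by
  classical
  set B : ∀ i, Finset (α i) := fun i => if i ∈ S then {g i} else univ
  have hmem (x : ∀ i, α i) : x ∈ {x | ∀ i ∈ S, x i = g i} ↔ x ∈ Fintype.piFinset B := by
    simp only [Set.mem_ofPred_eq, Fintype.mem_piFinset, B]
    exact forall_congr' fun i => by by_cases hi : i ∈ S <;> simp [hi]
  have hsum (i) : ∑ o ∈ B i, q i o = if i ∈ S then q i (g i) else 1 := by
    by_cases hi : i ∈ S <;> simp [B, hi, hq]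
  simp only [prob, Set.indicator_apply, hmem, prodWeight]
  rw [← Finset.sum_filter, filter_univ_mem, ← Finset.prod_univ_sum]
  simp only [hsum, Finset.prod_ite_mem, univ_inter]

theorem prob_prodWeight_le_pow (hq : ∀ i, IsProbVec (q i)) {s : Set (∀ i, α i)} {S : Finset ι}
    {z : ℝ} (hz : 0 ≤ z) (hsz : ∀ x ∈ s, ∀ i ∈ S, q i (x i) ≤ z)
    (hs : ∀ x ∈ s, ∀ y ∈ s, ∀ i ∈ S, x i = y i) : prob (prodWeight q) s ≤ z ^ #S := by
  rcases s.eq_empty_or_nonempty with rfl | ⟨g, hg⟩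
  · simpa [prob] using pow_nonneg hz _
  calc prob (prodWeight q) s ≤ prob (prodWeight q) {x | ∀ i ∈ S, x i = g i} :=
        prob_mono (isProbVec_prodWeight hq).1 fun x hx i hi => hs x hx g hg i hi
    _ = ∏ i ∈ S, q i (g i) := prob_prodWeight_cylinder (fun i => (hq i).2) S g
    _ ≤ ∏ _i ∈ S, z := Finset.prod_le_prod (fun i _ => (hq i).1 _) (hsz g hg)
    _ = z ^ #S := Finset.prod_const z

theorem isDissociated_prodWeight {A : Type*} (hq : ∀ i, ∑ o, q i o = 1) {s : A → Set (∀ i, α i)}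
    {S : A → Set ι} (hs : ∀ a, DependsOn (· ∈ s a) (S a)) {D : A → Finset A} (hmem : ∀ a, a ∈ D a)
    (hD : ∀ a, ∀ b ∉ D a, Disjoint (S a) (S b)) : IsDissociated (prodWeight q) s D where
  mem_self := hmem
  dotProduct_indicator a g hg := by
    classical
    have hf : DependsOn ((s a).indicator (1 : (∀ i, α i) → ℝ)) (S a) := fun x y hxy => by
      simp only [Set.indicator_apply, Pi.one_apply,
        show x ∈ s a ↔ y ∈ s a from iff_of_eq (hs a hxy)]
    have hg' : DependsOn g (S a)ᶜ := fun x y hxy => hg x y fun b hb =>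
      iff_of_eq (hs b fun i hi => hxy i ((hD a b hb).notMem_of_mem_right hi))
    rw [← dotProduct_indicator_one, ← prodWeight_dotProduct_mul hq hf hg']
    congr 1
    ext x
    by_cases hx : x ∈ s a <;> simp [hx]

end ProductWeight

/-! ### Cycles and their edge sets -/

section Cycle

theorem fin_add_one_ne {r : ℕ} (i : Fin (r + 2)) : i + 1 ≠ i := by simp

theorem fin_add_one_add_one_ne {r : ℕ} (i : Fin (r + 3)) : i + 1 + 1 ≠ i := by
  rw [add_assoc, Ne, add_eq_left, Fin.ext_iff, Fin.val_add]
  simp [Nat.mod_eq_of_lt]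

open Fin.NatCast in
theorem fin_eq_univ_of_add_one_mem {k : ℕ} [NeZero k] {A : Finset (Fin k)} (hA : A.Nonempty)
    (hsucc : ∀ i ∈ A, i + 1 ∈ A) : A = univ := by
  obtain ⟨a, ha⟩ := hA
  have hadd (m : ℕ) : a + (m : Fin k) ∈ A := by
    induction m with
    | zero => simpa using ha
    | succ m ih => simpa [add_assoc] using hsucc _ ih
  refine eq_univ_iff_forall.2 fun i => ?_
  simpa using hadd (i - a).val

variable {V : Type*}

theorem injective_cycleEdge {r : ℕ} {c : Fin (r + 3) → V} (hc : Function.Injective c) :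
    Function.Injective fun i => s(c i, c (i + 1)) := by
  intro i j hij
  rcases Sym2.eq_iff.1 hij with ⟨h, -⟩ | ⟨h₁, h₂⟩
  · exact hc h
  · rw [hc h₁] at h₂
    exact absurd (hc h₂) (fin_add_one_add_one_ne j)

variable [DecidableEq V]

/-- The edges of the closed walk through the vertices `c 0, c 1, …, c (k - 1), c 0`; addition in
`Fin k` is modulo `k`. -/
def cycleEdges {k : ℕ} [NeZero k] (c : Fin k → V) : Finset (Sym2 V) :=
  univ.image fun i => s(c i, c (i + 1))

theorem mem_cycleEdges {k : ℕ} [NeZero k] (c : Fin k → V) (i : Fin k) :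
    s(c i, c (i + 1)) ∈ cycleEdges c :=
  mem_image_of_mem _ (mem_univ i)

theorem mem_image_of_mem_cycleEdges {k : ℕ} [NeZero k] {c : Fin k → V} {e : Sym2 V} {v : V}
    (he : e ∈ cycleEdges c) (hv : v ∈ e) : v ∈ univ.image c := by
  obtain ⟨i, -, rfl⟩ := mem_image.1 he
  rcases Sym2.mem_iff.1 hv with rfl | rfl <;> exact mem_image_of_mem c (mem_univ _)

theorem card_image_univ_inter {ι α : Type*} [Fintype ι] [DecidableEq α] {f : ι → α}
    (hf : Function.Injective f) (W : Finset α) : #(univ.image f ∩ W) = #{i | f i ∈ W} := by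
  rw [← filter_mem_eq_inter, filter_image, card_image_of_injective _ hf]

variable {r r' : ℕ} {c : Fin (r + 3) → V} {c' : Fin (r' + 3) → V}

theorem card_cycleEdges (hc : Function.Injective c) : #(cycleEdges c) = r + 3 := by
  rw [cycleEdges, card_image_of_injective _ (injective_cycleEdge hc), card_univ, Fintype.card_fin]

/-- The vertices of the cycle `c` which lie on `c'` span a proper part of `c`, a union of arcs, and
an arc has more vertices than edges. -/
theorem card_cycleEdges_inter_lt (hc : Function.Injective c)
    (hmeet : (univ.image c ∩ univ.image c').Nonempty) (hsub : ¬cycleEdges c ⊆ cycleEdges c') :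
    #(cycleEdges c ∩ cycleEdges c') < #(univ.image c ∩ univ.image c') := by
  rw [cycleEdges, card_image_univ_inter (injective_cycleEdge hc), card_image_univ_inter hc]
  have hends (i) (hi : s(c i, c (i + 1)) ∈ cycleEdges c') :
      c i ∈ univ.image c' ∧ c (i + 1) ∈ univ.image c' :=
    ⟨mem_image_of_mem_cycleEdges hi (Sym2.mem_mk_left _ _),
      mem_image_of_mem_cycleEdges hi (Sym2.mem_mk_right _ _)⟩
  refine card_lt_card (ssubset_iff_subset_not_subset.2
    ⟨fun i hi => by simpa using (hends i (by simpa using hi)).1, fun hclosed => hsub ?_⟩)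
  have hall : ({i | c i ∈ univ.image c'} : Finset _) = univ := by
    refine fin_eq_univ_of_add_one_mem ?_ fun i hi => ?_
    · obtain ⟨v, hv⟩ := hmeet
      obtain ⟨hvc, hvc'⟩ := mem_inter.1 hv
      obtain ⟨i, -, rfl⟩ := mem_image.1 hvc
      exact ⟨i, mem_filter.2 ⟨mem_univ i, hvc'⟩⟩
    · exact mem_filter.2 ⟨mem_univ _, (hends i (mem_filter.1 (hclosed hi)).2).2⟩
  rw [hall] at hclosed
  exact image_subset_iff.2 fun i hi => (mem_filter.1 (hclosed hi)).2

theorem card_image_union_lt_card_cycleEdges_union (hc : Function.Injective c)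
    (hc' : Function.Injective c') (hmeet : (univ.image c ∩ univ.image c').Nonempty)
    (hne : cycleEdges c ≠ cycleEdges c') :
    #(univ.image c ∪ univ.image c') < #(cycleEdges c ∪ cycleEdges c') := by
  have hinter : #(cycleEdges c ∩ cycleEdges c') < #(univ.image c ∩ univ.image c') := by
    by_cases hsub : cycleEdges c ⊆ cycleEdges c'
    · have hsub' : ¬cycleEdges c' ⊆ cycleEdges c := fun h => hne (hsub.antisymm h)
      rw [inter_comm] at hmeet ⊢
      rw [inter_comm (univ.image c)]
      exact card_cycleEdges_inter_lt hc' hmeet hsub'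
    · exact card_cycleEdges_inter_lt hc hmeet hsub
  have hE := card_union_add_card_inter (cycleEdges c) (cycleEdges c')
  have hV := card_union_add_card_inter (univ.image c) (univ.image c')
  rw [card_cycleEdges hc, card_cycleEdges hc'] at hE
  rw [card_image_of_injective _ hc, card_image_of_injective _ hc', card_univ, card_univ,
    Fintype.card_fin, Fintype.card_fin] at hV
  omega

theorem eq_or_eq_of_mem_cycleEdges (hc : Function.Injective c) {i : Fin (r + 3)} {v : V}
    (h : s(c i, v) ∈ cycleEdges c) : v = c (i + 1) ∨ v = c (i - 1) := by
  obtain ⟨j, -, hj⟩ := mem_image.1 h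
  rcases Sym2.eq_iff.1 hj with ⟨h₁, h₂⟩ | ⟨h₁, h₂⟩
  · left
    rw [← hc h₁, h₂]
  · right
    rw [← hc h₂, ← h₁, add_sub_cancel_right]

theorem eq_of_cycleEdges_eq {c' : Fin (r + 3) → V} (hc : Function.Injective c)
    (hc' : Function.Injective c') (hE : cycleEdges c = cycleEdges c') (h0 : c 0 = c' 0)
    (h1 : c 1 = c' 1) : c = c' := by
  have hall : ({i | c i = c' i ∧ c (i + 1) = c' (i + 1)} : Finset _) = univ := by
    refine fin_eq_univ_of_add_one_mem ⟨0, by simp [h0, h1]⟩ fun i hi => ?_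
    obtain ⟨hi, hi'⟩ := (mem_filter.1 hi).2
    refine mem_filter.2 ⟨mem_univ _, hi', ?_⟩
    have hmem := mem_cycleEdges c (i + 1)
    rw [hE, hi'] at hmem
    refine (eq_or_eq_of_mem_cycleEdges hc' hmem).resolve_right fun hback => ?_
    rw [add_sub_cancel_right, ← hi] at hback
    exact fin_add_one_add_one_ne i (hc hback)
  exact funext fun i => (mem_filter.1 (hall.ge (mem_univ i))).2.1

end Cycle

section CanonicalCycle

variable {V : Type*} [LinearOrder V]

/-- An injective closed walk based at its smallest vertex. -/
def IsRooted {k : ℕ} [NeZero k] (c : Fin k → V) : Prop :=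
  Function.Injective c ∧ ∀ i, c 0 ≤ c i

variable (V) in
/-- The cycles of length `r + 3` on the vertex set `V`. A cycle is encoded by its canonical
traversal, which starts at the smallest vertex and proceeds towards its smaller neighbour. -/
abbrev CanonicalCycle (r : ℕ) : Type _ := {c : Fin (r + 3) → V // IsRooted c ∧ c 1 < c (-1)}

variable {r : ℕ}

instance : CoeFun (CanonicalCycle V r) fun _ => Fin (r + 3) → V := ⟨Subtype.val⟩

noncomputable instance [Fintype V] : Fintype (CanonicalCycle V r) :=
  @Subtype.fintype _ _ (Classical.decPred _) _

theorem CanonicalCycle.injective (c : CanonicalCycle V r) : Function.Injective c := c.2.1.1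

theorem CanonicalCycle.apply_zero_le {r' : ℕ} (c : CanonicalCycle V r) {c' : CanonicalCycle V r'}
    (hE : cycleEdges c = cycleEdges c') : c 0 ≤ c' 0 := by
  have hmem : c' 0 ∈ univ.image c :=
    mem_image_of_mem_cycleEdges (hE ▸ mem_cycleEdges c' 0) (Sym2.mem_mk_left _ _)
  obtain ⟨i, -, hi⟩ := mem_image.1 hmem
  exact (c.2.1.2 i).trans_eq hi

theorem CanonicalCycle.eq_of_cycleEdges_eq {c c' : CanonicalCycle V r}
    (hE : cycleEdges c = cycleEdges c') : c = c' := by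
  have h0 : c 0 = c' 0 := (c.apply_zero_le hE).antisymm (c'.apply_zero_le hE.symm)
  have hfwd : c 1 = c' 1 ∨ c 1 = c' (-1) := by
    have hmem := mem_cycleEdges c 0
    rw [hE, h0] at hmem
    simpa using eq_or_eq_of_mem_cycleEdges c'.injective hmem
  have hbwd : c (-1) = c' 1 ∨ c (-1) = c' (-1) := by
    have hmem := mem_cycleEdges c (-1)
    rw [hE, neg_add_cancel, h0, Sym2.eq_swap] at hmem
    simpa using eq_or_eq_of_mem_cycleEdges c'.injective hmem
  have h1 : c 1 = c' 1 := by
    refine hfwd.resolve_right fun h => ?_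
    have hlt := c.2.2
    rcases hbwd with h' | h' <;> rw [h, h'] at hlt
    exacts [hlt.asymm c'.2.2, hlt.false]
  exact Subtype.ext (LSBM.eq_of_cycleEdges_eq c.injective c'.injective hE h0 h1)

variable [Finite V]

theorem mul_card_isRooted (k : ℕ) [NeZero k] :
    k * Nat.card {c : Fin k → V // IsRooted c} = (Nat.card V).descFactorial k := by
  have hrot (j : Fin k) {c : Fin k → V} (hc : Function.Injective c) :
      Function.Injective fun i => c (i - j) := hc.comp (sub_left_injective)
  let rotate (p : Fin k × {c : Fin k → V // IsRooted c}) : {x : Fin k → V // x.Injective} :=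
    ⟨fun i => p.2.1 (i - p.1), hrot p.1 p.2.2.1⟩
  have rotate_bijective : Function.Bijective rotate := by
    constructor
    · rintro ⟨j, c, hc⟩ ⟨j', c', hc'⟩ h
      have happ (i) : c (i - j) = c' (i - j') := congrFun (congrArg Subtype.val h) i
      have hmin : c (j' - j) = c 0 := by
        refine le_antisymm ?_ (hc.2 _)
        calc c (j' - j) = c' 0 := by rw [happ, sub_self]
          _ ≤ c' (j - j') := hc'.2 _
          _ = c 0 := by rw [← happ, sub_self]
      obtain rfl : j' = j := sub_eq_zero.1 (hc.1 hmin)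
      obtain rfl : c = c' := funext fun i => by simpa using happ (i + j')
      rfl
    · rintro ⟨x, hx⟩
      obtain ⟨j, hj⟩ := Finite.exists_min x
      refine ⟨(j, ⟨fun i => x (i + j), hx.comp (add_left_injective j), fun i => ?_⟩), ?_⟩
      · simpa using hj (i + j)
      · exact Subtype.ext (funext fun i => congrArg x (sub_add_cancel i j))
  have := Fintype.ofFinite V
  have hcard := Nat.card_congr ((Equiv.ofBijective rotate rotate_bijective).trans
    (Equiv.subtypeInjectiveEquivEmbedding _ _))
  rwa [Nat.card_prod, Nat.card_fin, Nat.card_eq_fintype_card (α := Fin k ↪ V),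
    Fintype.card_embedding_eq, Fintype.card_fin, ← Nat.card_eq_fintype_card] at hcard

theorem two_mul_card_subtype {X : Type*} [Finite X] {p : X → Prop} (σ : Equiv.Perm X)
    (hσ : ∀ x, ¬p (σ x) ↔ p x) : 2 * Nat.card {x // p x} = Nat.card X := by
  classical
  rw [← Nat.card_congr (Equiv.sumCompl p), Nat.card_sum, two_mul, Nat.add_left_cancel_iff]
  exact Nat.card_congr (σ.subtypeEquiv fun x => (hσ x).symm)

theorem two_mul_card_canonicalCycle (r : ℕ) :
    2 * Nat.card (CanonicalCycle V r) = Nat.card {c : Fin (r + 3) → V // IsRooted c} := by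
  have hrefl {c : Fin (r + 3) → V} (hc : IsRooted c) : IsRooted fun i => c (-i) :=
    ⟨hc.1.comp neg_injective, fun i => by simpa using hc.2 (-i)⟩
  let reflect : Equiv.Perm {c : Fin (r + 3) → V // IsRooted c} :=
    Function.Involutive.toPerm (fun c => ⟨fun i => c.1 (-i), hrefl c.2⟩)
      fun c => Subtype.ext (funext fun i => by simp)
  rw [← two_mul_card_subtype reflect (p := fun c => c.1 1 < c.1 (-1))]
  · exact congrArg _ (Nat.card_congr (Equiv.subtypeSubtypeEquivSubtypeInter _ _).symm)
  · intro c
    have hne : c.1 1 ≠ c.1 (-1) := fun h =>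
      fin_add_one_add_one_ne (-1 : Fin (r + 3)) (by rw [neg_add_cancel, zero_add]; exact c.2.1 h)
    change ¬c.1 (-1) < c.1 (- -1) ↔ _
    rw [neg_neg, not_lt, hne.le_iff_lt]

theorem mul_card_canonicalCycle (r : ℕ) :
    2 * (r + 3) * Nat.card (CanonicalCycle V r) = (Nat.card V).descFactorial (r + 3) := by
  rw [← mul_card_isRooted, ← two_mul_card_canonicalCycle]
  ring

end CanonicalCycle

section ImageSum

variable {V : Type*} [Fintype V] [DecidableEq V] {z C : ℝ}

theorem sum_pow_card_insert_le (hz : 0 ≤ z) (I : Finset V) :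
    ∑ v, z ^ #(insert v I) ≤ (Fintype.card V * z + #I) * z ^ #I := by
  have hterm (v : V) : z ^ #(insert v I) ≤ z * z ^ #I + if v ∈ I then z ^ #I else 0 := by
    by_cases hv : v ∈ I
    · simpa [hv] using mul_nonneg hz (pow_nonneg hz _)
    · simp [hv, card_insert_of_notMem, pow_succ']
  refine (Finset.sum_le_sum fun v _ => hterm v).trans_eq ?_
  simp only [sum_add_distrib, sum_const, card_univ, nsmul_eq_mul, sum_ite_mem, univ_inter]
  ring

theorem sum_pow_card_image_le (hz : 0 ≤ z) (hC : Fintype.card V * z ≤ C) (N : ℕ) :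
    ∑ f : Fin N → V, z ^ #(univ.image f) ≤ ∏ i ∈ range N, (C + i) := by
  induction N with
  | zero => simp
  | succ N ih =>
    have himage (v : V) (f : Fin N → V) :
        univ.image (Fin.cons v f : Fin (N + 1) → V) = insert v (univ.image f) := by
      ext u
      simp [Fin.exists_fin_succ, eq_comm]
    have hstep (f : Fin N → V) :
        ∑ v, z ^ #(insert v (univ.image f)) ≤ (C + N) * z ^ #(univ.image f) := by
      have hcard : (#(univ.image f) : ℝ) ≤ N := by exact_mod_cast card_image_le.trans (by simp)
      exact (sum_pow_card_insert_le hz _).trans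
        (mul_le_mul_of_nonneg_right (add_le_add hC hcard) (pow_nonneg hz _))
    have hCN : 0 ≤ C + N :=
      add_nonneg ((mul_nonneg (Nat.cast_nonneg _) hz).trans hC) (Nat.cast_nonneg _)
    calc ∑ f : Fin (N + 1) → V, z ^ #(univ.image f)
      _ = ∑ f : Fin N → V, ∑ v, z ^ #(insert v (univ.image f)) := by
        rw [← (Fin.consEquiv fun _ => V).sum_comp, Fintype.sum_prod_type_right]
        simp only [Fin.consEquiv, Equiv.coe_fn_mk, himage]
      _ ≤ (C + N) * ∑ f : Fin N → V, z ^ #(univ.image f) := by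
        rw [Finset.mul_sum]
        exact Finset.sum_le_sum fun f _ => hstep f
      _ ≤ ∏ i ∈ range (N + 1), (C + i) := by
        rw [Finset.prod_range_succ_comm]
        exact mul_le_mul_of_nonneg_left ih hCN

theorem sum_pow_card_image_union_le (hz : 0 ≤ z) (hC : Fintype.card V * z ≤ C) (M N : ℕ) :
    ∑ f : Fin M → V, ∑ g : Fin N → V, z ^ #(univ.image f ∪ univ.image g) ≤
      ∏ i ∈ range (M + N), (C + i) := by
  refine le_trans (le_of_eq ?_) (sum_pow_card_image_le hz hC (M + N))
  have himage (f : Fin M → V) (g : Fin N → V) :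
      univ.image f ∪ univ.image g = univ.image (Fin.append f g) := by
    ext v
    simp [← not_forall_not, Fin.forall_fin_add, -not_forall, or_iff_not_imp_left]
  rw [← (Fin.appendEquiv M N).sum_comp, Fintype.sum_prod_type]
  simp only [himage, Fin.appendEquiv, Equiv.coe_fn_mk]

end ImageSum

theorem CanonicalCycle.sum_le_sum_univ {V : Type*} [Fintype V] [LinearOrder V] {r : ℕ}
    {f : (Fin (r + 3) → V) → ℝ} (hf : ∀ x, 0 ≤ f x) :
    ∑ c : CanonicalCycle V r, f c ≤ ∑ x, f x := by
  have hmap := sum_map (univ : Finset (CanonicalCycle V r)) (.subtype _) f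
  exact hmap.ge.trans (sum_le_univ_sum_of_nonneg hf)

theorem CanonicalCycle.sum_pow_card_image_union_le {V : Type*} [Fintype V] [LinearOrder V]
    {z C : ℝ} (hz : 0 ≤ z) (hC : Fintype.card V * z ≤ C) {r r' : ℕ} :
    ∑ c : CanonicalCycle V r, ∑ c' : CanonicalCycle V r', z ^ #(univ.image c ∪ univ.image c') ≤
      ∏ i ∈ range (r + 3 + (r' + 3)), (C + i) :=
  calc _ ≤ ∑ c : CanonicalCycle V r, ∑ y : Fin (r' + 3) → V, z ^ #(univ.image c ∪ univ.image y) :=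
        Finset.sum_le_sum fun c _ => CanonicalCycle.sum_le_sum_univ
          (f := fun y => z ^ #(univ.image c ∪ univ.image y)) fun _ => pow_nonneg hz _
    _ ≤ ∑ x : Fin (r + 3) → V, ∑ y : Fin (r' + 3) → V, z ^ #(univ.image x ∪ univ.image y) :=
        CanonicalCycle.sum_le_sum_univ
          (f := fun x => ∑ y : Fin (r' + 3) → V, z ^ #(univ.image x ∪ univ.image y))
          fun _ => Finset.sum_nonneg fun _ _ => pow_nonneg hz _
    _ ≤ _ := LSBM.sum_pow_card_image_union_le hz hC _ _

/-! ### Labelled cycles in random graphs -/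

section LabelEvent

variable {n : ℕ}

/-- The pair of two distinct vertices. -/
def mkPair {u v : Fin n} (h : u ≠ v) : Pairs n := ⟨(min u v, max u v), min_lt_max.2 h⟩

/-- The edge, in the sense of `SimpleGraph`, joining the two vertices of a pair. -/
def toSym2 (p : Pairs n) : Sym2 (Fin n) := s(p.1.1, p.1.2)

theorem injective_toSym2 : Function.Injective (toSym2 (n := n)) := by
  rintro ⟨⟨u, v⟩, huv⟩ ⟨⟨u', v'⟩, huv'⟩ h
  rcases Sym2.eq_iff.1 h with ⟨rfl, rfl⟩ | ⟨rfl, rfl⟩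
  exacts [rfl, (huv.asymm huv').elim]

theorem toSym2_mkPair {u v : Fin n} (h : u ≠ v) : toSym2 (mkPair h) = s(u, v) := by
  rcases h.lt_or_gt with h | h
  · simp [toSym2, mkPair, h.le]
  · simp [toSym2, mkPair, h.le, Sym2.eq_swap]

theorem getLabel_eq_apply_mkPair (E : EdgeConf n L) {u v : Fin n} (h : u ≠ v) :
    getLabel E u v = E (mkPair h) := by
  rcases h.lt_or_gt with h | h
  · simp [getLabel, mkPair, h, h.le]
  · simp [getLabel, mkPair, h, h.le, h.not_gt]

namespace CanonicalCycle

variable {r r' : ℕ}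

/-- The `i`-th edge of a cycle, as an index into `EdgeConf`. -/
def pair (c : CanonicalCycle (Fin n) r) (i : Fin (r + 3)) : Pairs n :=
  mkPair (c.injective.ne (fin_add_one_ne i).symm)

theorem toSym2_comp_pair (c : CanonicalCycle (Fin n) r) :
    toSym2 ∘ c.pair = fun i => s(c i, c (i + 1)) :=
  funext fun _ => toSym2_mkPair _

theorem injective_pair (c : CanonicalCycle (Fin n) r) : Function.Injective c.pair :=
  .of_comp (f := toSym2) (c.toSym2_comp_pair ▸ injective_cycleEdge c.injective)

/-- The edges of a cycle, as indices into `EdgeConf`. -/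
def pairs (c : CanonicalCycle (Fin n) r) : Finset (Pairs n) := univ.image c.pair

theorem pair_mem_pairs (c : CanonicalCycle (Fin n) r) (i : Fin (r + 3)) : c.pair i ∈ c.pairs :=
  mem_image_of_mem _ (mem_univ i)

theorem image_toSym2_pairs (c : CanonicalCycle (Fin n) r) :
    c.pairs.image toSym2 = cycleEdges c := by
  rw [pairs, image_image, toSym2_comp_pair, cycleEdges]

theorem card_pairs_union (c : CanonicalCycle (Fin n) r) (c' : CanonicalCycle (Fin n) r') :
    #(c.pairs ∪ c'.pairs) = #(cycleEdges c ∪ cycleEdges c') := by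
  rw [← image_toSym2_pairs, ← image_toSym2_pairs, ← image_union,
    card_image_of_injective _ injective_toSym2]

theorem card_image (c : CanonicalCycle (Fin n) r) : #(univ.image c) = r + 3 := by
  rw [card_image_of_injective _ c.injective, card_univ, Fintype.card_fin]

theorem nonempty_inter_of_not_disjoint_pairs {c : CanonicalCycle (Fin n) r}
    {c' : CanonicalCycle (Fin n) r'} (h : ¬Disjoint c.pairs c'.pairs) :
    (univ.image c ∩ univ.image c').Nonempty := by
  obtain ⟨p, hp, hp'⟩ := not_disjoint_iff.1 h
  have hE := mem_image_of_mem toSym2 hp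
  have hE' := mem_image_of_mem toSym2 hp'
  rw [image_toSym2_pairs] at hE hE'
  exact ⟨p.1.1, mem_inter.2 ⟨mem_image_of_mem_cycleEdges hE (Sym2.mem_mk_left _ _),
    mem_image_of_mem_cycleEdges hE' (Sym2.mem_mk_left _ _)⟩⟩

/-- The event that all edges of the cycle `c` are present, with labels `l`. -/
def labelEvent (c : CanonicalCycle (Fin n) r) (l : Fin (r + 3) → L) : Set (EdgeConf n L) :=
  {E | ∀ i, E (c.pair i) = some (l i)}

variable {c : CanonicalCycle (Fin n) r} {c' : CanonicalCycle (Fin n) r'} {l : Fin (r + 3) → L}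
  {l' : Fin (r' + 3) → L}

theorem exists_eq_some_of_mem_labelEvent {E : EdgeConf n L} (hE : E ∈ c.labelEvent l) {p : Pairs n}
    (hp : p ∈ c.pairs) : ∃ x, E p = some x := by
  obtain ⟨i, -, rfl⟩ := mem_image.1 hp
  exact ⟨l i, hE i⟩

theorem eq_of_mem_labelEvent {E E' : EdgeConf n L} (hE : E ∈ c.labelEvent l)
    (hE' : E' ∈ c.labelEvent l) {p : Pairs n} (hp : p ∈ c.pairs) : E p = E' p := by
  obtain ⟨i, -, rfl⟩ := mem_image.1 hp
  rw [hE i, hE' i]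

theorem dependsOn_labelEvent (c : CanonicalCycle (Fin n) r) (l : Fin (r + 3) → L) :
    DependsOn (· ∈ c.labelEvent l) (c.pairs : Set (Pairs n)) := fun E E' h => by
  simp only [labelEvent, Set.mem_ofPred_eq, h _ (c.pair_mem_pairs _)]

variable [Fintype L] {q : Option L → ℝ}

theorem prob_labelEvent (hq : ∑ o, q o = 1) (c : CanonicalCycle (Fin n) r) (l : Fin (r + 3) → L) :
    prob (prodWeight fun _ : Pairs n => q) (c.labelEvent l) = ∏ i, q (some (l i)) := by
  set g : EdgeConf n L := Function.extend c.pair (fun i => some (l i)) fun _ => none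
  have hg (i) : g (c.pair i) = some (l i) := c.injective_pair.extend_apply _ _ i
  have hcyl : c.labelEvent l = {E | ∀ p ∈ c.pairs, E p = g p} := by
    ext E
    simp [labelEvent, pairs, hg]
  rw [hcyl, prob_prodWeight_cylinder fun _ => hq, pairs, Finset.prod_image c.injective_pair.injOn]
  simp only [hg]

theorem prob_labelEvent_le (hq : IsProbVec q) {z : ℝ} (hz : ∀ x, q (some x) ≤ z)
    (c : CanonicalCycle (Fin n) r) (l : Fin (r + 3) → L) :
    prob (prodWeight fun _ : Pairs n => q) (c.labelEvent l) ≤ z ^ (r + 3) := by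
  rw [prob_labelEvent hq.2]
  exact (Finset.prod_le_prod (fun i _ => hq.1 _) fun i _ => hz _).trans_eq (by simp)

theorem prob_labelEvent_inter_le (hq : IsProbVec q) {z : ℝ} (hz₀ : 0 ≤ z)
    (hz : ∀ x, q (some x) ≤ z) :
    prob (prodWeight fun _ : Pairs n => q) (c.labelEvent l ∩ c'.labelEvent l') ≤
      z ^ #(c.pairs ∪ c'.pairs) := by
  refine prob_prodWeight_le_pow (fun _ => hq) hz₀ (fun E hE p hp => ?_) fun E hE E' hE' p hp => ?_
  · obtain ⟨x, hx⟩ : ∃ x, E p = some x := (mem_union.1 hp).elim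
      (exists_eq_some_of_mem_labelEvent hE.1) (exists_eq_some_of_mem_labelEvent hE.2)
    exact hx ▸ hz x
  · exact (mem_union.1 hp).elim (eq_of_mem_labelEvent hE.1 hE'.1)
      (eq_of_mem_labelEvent hE.2 hE'.2)

end CanonicalCycle

theorem cycleCount_eq_sum [DecidableEq L] {r : ℕ} (E : EdgeConf n L) (l : Fin (r + 3) → L) :
    cycleCount n (r + 3) E l =
      ∑ c : CanonicalCycle (Fin n) r, (c.labelEvent l).indicator (fun _ => 1) E := by
  classical
  have hlast : (⟨r + 3 - 1, by omega⟩ : Fin (r + 3)) = -1 := by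
    rw [← Fin.neg_last (r + 2), neg_neg]
    rfl
  have hmem (c : CanonicalCycle (Fin n) r) :
      E ∈ c.labelEvent l ↔ ∀ i, getLabel E (c i) (c (i + 1)) = some (l i) :=
    forall_congr' fun i => by rw [getLabel_eq_apply_mkPair, CanonicalCycle.pair]
  rw [cycleCount, dif_pos (Nat.succ_pos _), eq_comm]
  simp only [hlast, Set.indicator_apply, hmem]
  rw [← Finset.card_filter]
  refine card_nbij (fun c => c) (fun c hc => ?_) Subtype.val_injective.injOn fun c hc => ?_
  · exact mem_filter.2 ⟨mem_univ _, c.2.1.1, c.2.1.2, c.2.2, (mem_filter.1 hc).2⟩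
  · obtain ⟨-, hinj, hmin, hdir, hlab⟩ := mem_filter.1 hc
    exact ⟨⟨c, ⟨hinj, hmin⟩, hdir⟩, mem_filter.2 ⟨mem_univ _, hlab⟩, rfl⟩

end LabelEvent

section LabelledCycle

variable {n : ℕ} {T : Finset (Σ r : ℕ, Fin (r + 3) → L)}

variable (n T) in
/-- The possible occurrences of the label sequences in `T` around a cycle on `Fin n`. A sequence of
`r + 3` labels is encoded as a pair `⟨r, l⟩`. -/
abbrev LabelledCycle : Type _ := Σ t : T, CanonicalCycle (Fin n) t.1.1

namespace LabelledCycle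

/-- The event that a labelled cycle occurs in the random graph. -/
def event (α : LabelledCycle n T) : Set (EdgeConf n L) := α.2.labelEvent α.1.1.2

/-- The labelled cycles sharing an edge with `α`, including `α` itself. -/
noncomputable def neighbours (α : LabelledCycle n T) : Finset (LabelledCycle n T) :=
  {β | ¬Disjoint α.2.pairs β.2.pairs}

theorem mem_neighbours {α β : LabelledCycle n T} :
    β ∈ α.neighbours ↔ ¬Disjoint α.2.pairs β.2.pairs := by
  simp [neighbours]

theorem self_mem_neighbours (α : LabelledCycle n T) : α ∈ α.neighbours := by
  rw [mem_neighbours, disjoint_self_iff_empty]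
  exact Nonempty.ne_empty ⟨_, α.2.pair_mem_pairs 0⟩

theorem eq_of_mem_event {α β : LabelledCycle n T} {E : EdgeConf n L} (hα : E ∈ α.event)
    (hβ : E ∈ β.event) (hE : cycleEdges α.2 = cycleEdges β.2) : α = β := by
  obtain ⟨⟨⟨r, l⟩, _⟩, c⟩ := α
  obtain ⟨⟨⟨r', l'⟩, _⟩, c'⟩ := β
  obtain rfl : r = r' := by
    have hcard := congrArg card hE
    rwa [card_cycleEdges c.injective, card_cycleEdges c'.injective, Nat.add_right_cancel_iff]
      at hcard
  obtain rfl : c = c' := CanonicalCycle.eq_of_cycleEdges_eq hE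
  obtain rfl : l = l' := funext fun i => Option.some_inj.1 ((hα i).symm.trans (hβ i))
  rfl

theorem occurrenceSum_event_apply [DecidableEq L] (E : EdgeConf n L) (t : T) :
    occurrenceSum event (fun α : LabelledCycle n T => (Pi.single α.1 1 : T → ℕ)) univ E t =
      cycleCount n (t.1.1 + 3) E t.1.2 := by
  have happly (t' : T) (s : Set (EdgeConf n L)) :
      s.indicator (fun _ => (Pi.single t' 1 : T → ℕ)) E t =
        s.indicator (fun _ => (Pi.single t' 1 : T → ℕ) t) E := by
    by_cases hE : E ∈ s <;> simp [hE]
  rw [occurrenceSum, Finset.sum_apply, Fintype.sum_sigma, cycleCount_eq_sum]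
  simp only [happly]
  rw [Fintype.sum_eq_single t fun t' ht' => by simp [Pi.single_eq_of_ne' ht']]
  simp only [Pi.single_eq_same, event]

variable [Fintype L] {q : Option L → ℝ} {z : ℝ}

theorem isDissociated_event (hq : ∑ o, q o = 1) :
    IsDissociated (prodWeight fun _ : Pairs n => q) (event (T := T)) neighbours :=
  isDissociated_prodWeight (fun _ => hq) (fun α => α.2.dependsOn_labelEvent α.1.1.2)
    self_mem_neighbours fun _ _ hβ =>
      disjoint_coe.2 (not_not.1 (mem_neighbours.not.1 hβ))

theorem prob_event_mul_le (hq : IsProbVec q) (hz₀ : 0 ≤ z) (hz₁ : z ≤ 1) (hz : ∀ x, q (some x) ≤ z)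
    {α β : LabelledCycle n T} (hβ : β ∈ α.neighbours) :
    prob (prodWeight fun _ : Pairs n => q) α.event *
        prob (prodWeight fun _ : Pairs n => q) β.event ≤
      z ^ (#(univ.image α.2 ∪ univ.image β.2) + 1) := by
  have hmeet := CanonicalCycle.nonempty_inter_of_not_disjoint_pairs (mem_neighbours.1 hβ)
  have hcard := card_union_add_card_inter (univ.image α.2) (univ.image β.2)
  rw [CanonicalCycle.card_image, CanonicalCycle.card_image] at hcard
  have hpos := hmeet.card_pos
  calc _ ≤ z ^ (α.1.1.1 + 3) * z ^ (β.1.1.1 + 3) :=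
        mul_le_mul (CanonicalCycle.prob_labelEvent_le hq hz _ _)
          (CanonicalCycle.prob_labelEvent_le hq hz _ _)
          (prob_nonneg (isProbVec_prodWeight fun _ => hq).1 _) (pow_nonneg hz₀ _)
    _ = z ^ (α.1.1.1 + 3 + (β.1.1.1 + 3)) := (pow_add _ _ _).symm
    _ ≤ _ := pow_le_pow_of_le_one hz₀ hz₁ (by omega)

theorem prob_event_inter_le (hq : IsProbVec q) (hz₀ : 0 ≤ z) (hz₁ : z ≤ 1)
    (hz : ∀ x, q (some x) ≤ z) {α β : LabelledCycle n T} (hβ : β ∈ α.neighbours) (hne : β ≠ α) :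
    prob (prodWeight fun _ : Pairs n => q) (α.event ∩ β.event) ≤
      z ^ (#(univ.image α.2 ∪ univ.image β.2) + 1) := by
  rcases (α.event ∩ β.event).eq_empty_or_nonempty with h | ⟨E, hα, hEβ⟩
  · simpa [h, prob] using pow_nonneg hz₀ _
  have hedges : cycleEdges α.2 ≠ cycleEdges β.2 := fun h => hne (eq_of_mem_event hα hEβ h).symm
  refine (CanonicalCycle.prob_labelEvent_inter_le hq hz₀ hz).trans
    (pow_le_pow_of_le_one hz₀ hz₁ ?_)
  rw [CanonicalCycle.card_pairs_union]
  exact card_image_union_lt_card_cycleEdges_union α.2.injective β.2.injective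
    (CanonicalCycle.nonempty_inter_of_not_disjoint_pairs (mem_neighbours.1 hβ)) hedges

variable [DecidableEq L]

theorem localError_event_le (hq : IsProbVec q) (hz₀ : 0 ≤ z) (hz₁ : z ≤ 1)
    (hz : ∀ x, q (some x) ≤ z) (α : LabelledCycle n T) :
    localError (prodWeight fun _ : Pairs n => q) event neighbours α ≤
      2 * z * ∑ β : LabelledCycle n T, z ^ #(univ.image α.2 ∪ univ.image β.2) := by
  have hle (B : Finset (LabelledCycle n T)) :
      ∑ β ∈ B, z ^ (#(univ.image α.2 ∪ univ.image β.2) + 1) ≤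
        z * ∑ β : LabelledCycle n T, z ^ #(univ.image α.2 ∪ univ.image β.2) := by
    simp only [Finset.mul_sum, ← pow_succ']
    exact sum_le_univ_sum_of_nonneg fun β => pow_nonneg hz₀ _
  rw [mul_assoc, two_mul]
  refine add_le_add (le_trans (sum_le_sum fun β hβ => ?_) (hle α.neighbours))
    (le_trans (sum_le_sum fun β hβ => ?_) (hle (α.neighbours.erase α)))
  · exact prob_event_mul_le hq hz₀ hz₁ hz hβ
  · exact prob_event_inter_le hq hz₀ hz₁ hz (mem_of_mem_erase hβ) (ne_of_mem_erase hβ)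

theorem chenSteinError_event_le (hq : IsProbVec q) (hz₀ : 0 ≤ z) (hz₁ : z ≤ 1)
    (hz : ∀ x, q (some x) ≤ z) {C : ℝ} (hC : n * z ≤ C) :
    chenSteinError (prodWeight fun _ : Pairs n => q) (event (T := T)) neighbours ≤
      2 * z * ∑ t : T, ∑ t' : T, ∏ i ∈ range (t.1.1 + 3 + (t'.1.1 + 3)), (C + i) := by
  refine (Finset.sum_le_sum fun α _ => localError_event_le hq hz₀ hz₁ hz α).trans ?_
  rw [← Finset.mul_sum]
  simp only [Fintype.sum_sigma]
  refine mul_le_mul_of_nonneg_left (Finset.sum_le_sum fun t _ => ?_) (by positivity)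
  rw [Finset.sum_comm]
  exact Finset.sum_le_sum fun t' _ =>
    CanonicalCycle.sum_pow_card_image_union_le hz₀ (by simpa using hC)

end LabelledCycle

end LabelledCycle

section Asymptotics

theorem tendsto_card_canonicalCycle_div_pow (r : ℕ) :
    Tendsto (fun n : ℕ => (Fintype.card (CanonicalCycle (Fin n) r) : ℝ) / n ^ (r + 3)) atTop
      (nhds (1 / (2 * (r + 3)))) := by
  have hdesc : Tendsto (fun n : ℕ => (n.descFactorial (r + 3) : ℝ) / n ^ (r + 3)) atTop
      (nhds 1) := by
    refine (Asymptotics.isEquivalent_iff_tendsto_one ?_).1 (isEquivalent_descFactorial (r + 3))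
    filter_upwards [eventually_ne_atTop 0] with n hn
    positivity
  refine (hdesc.div_const (2 * (r + 3))).congr fun n => ?_
  have hcard := mul_card_canonicalCycle (V := Fin n) r
  rw [Nat.card_fin, Nat.card_eq_fintype_card] at hcard
  rw [← hcard]
  push_cast
  field_simp

theorem exists_eventually_forall_le_div [Finite L] {q : ℕ → Option L → ℝ} {w : L → ℝ}
    (hw : ∀ x, Tendsto (fun n : ℕ => n * q n (some x)) atTop (nhds (w x))) :
    ∃ C : ℝ, 0 ≤ C ∧ ∀ᶠ n : ℕ in atTop, ∀ x, q n (some x) ≤ C / n := by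
  have := Fintype.ofFinite L
  obtain ⟨C, hC⟩ := (tendsto_pi_nhds.2 hw).norm.isBoundedUnder_le
  refine ⟨|C|, abs_nonneg C, ?_⟩
  filter_upwards [eventually_map.1 hC, eventually_gt_atTop 0] with n hn hpos x
  rw [le_div_iff₀' (Nat.cast_pos.2 hpos)]
  exact ((le_abs_self _).trans ((norm_le_pi_norm _ x).trans hn)).trans (le_abs_self C)

variable [Fintype L] [DecidableEq L] {q : ℕ → Option L → ℝ} {w : L → ℝ}

namespace LabelledCycle

variable {T : Finset (Σ r : ℕ, Fin (r + 3) → L)}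

theorem tendsto_chenSteinError_event (hq : ∀ᶠ n in atTop, IsProbVec (q n))
    (hw : ∀ x, Tendsto (fun n : ℕ => n * q n (some x)) atTop (nhds (w x))) :
    Tendsto (fun n => chenSteinError (prodWeight fun _ : Pairs n => q n) (event (T := T))
      neighbours) atTop (nhds 0) := by
  obtain ⟨C, hC, hle⟩ := exists_eventually_forall_le_div hw
  have hz : Tendsto (fun n : ℕ => C / n) atTop (nhds 0) := tendsto_const_div_atTop_nhds_zero_nat C
  have hbound : Tendsto (fun n : ℕ => 2 * (C / n) *
      ∑ t : T, ∑ t' : T, ∏ i ∈ range (t.1.1 + 3 + (t'.1.1 + 3)), (C + i)) atTop (nhds 0) := by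
    simpa using (hz.const_mul 2).mul_const _
  refine squeeze_zero' ?_ ?_ hbound
  · filter_upwards [hq] with n hqn
    exact sum_nonneg fun α _ => localError_nonneg (isProbVec_prodWeight fun _ => hqn).1 α
  · filter_upwards [hq, hle, hz.eventually_le_const one_pos, eventually_ne_atTop 0]
      with n hqn hqz hz₁ hn
    exact chenSteinError_event_le hqn (by positivity) hz₁ hqz
      (mul_div_cancel₀ C (Nat.cast_ne_zero.2 hn)).le

theorem sum_prob_event_eq {n : ℕ} {q : Option L → ℝ} (hq : ∑ o, q o = 1) (t : T) :
    ∑ α : LabelledCycle n T with α.1 = t, prob (prodWeight fun _ : Pairs n => q) α.event =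
      Fintype.card (CanonicalCycle (Fin n) t.1.1) * ∏ i, q (some (t.1.2 i)) := by
  rw [Finset.sum_filter, Fintype.sum_sigma, Fintype.sum_eq_single t fun t' ht' => by simp [ht']]
  simp [event, CanonicalCycle.prob_labelEvent hq]

theorem tendsto_sum_prob_event (hq : ∀ᶠ n in atTop, IsProbVec (q n))
    (hw : ∀ x, Tendsto (fun n : ℕ => n * q n (some x)) atTop (nhds (w x))) (t : T) :
    Tendsto (fun n => ∑ α : LabelledCycle n T with α.1 = t,
      prob (prodWeight fun _ : Pairs n => q n) α.event) atTop
      (nhds ((∏ i, w (t.1.2 i)) / (2 * (t.1.1 + 3)))) := by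
  have hlim := (tendsto_card_canonicalCycle_div_pow t.1.1).mul
    (tendsto_finsetProd univ fun i _ => hw (t.1.2 i))
  rw [one_div_mul_eq_div] at hlim
  refine hlim.congr' ?_
  filter_upwards [hq, eventually_ne_atTop 0] with n hqn hn
  rw [sum_prob_event_eq hqn.2, Finset.prod_mul_distrib, Finset.prod_const, card_univ,
    Fintype.card_fin]
  field_simp

end LabelledCycle

theorem tendsto_prob_cycleCount_eq (hq : ∀ᶠ n in atTop, IsProbVec (q n))
    (hw : ∀ x, Tendsto (fun n : ℕ => n * q n (some x)) atTop (nhds (w x)))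
    (T : Finset (Σ r : ℕ, Fin (r + 3) → L)) (j : T → ℕ) :
    Tendsto (fun n => prob (prodWeight fun _ : Pairs n => q n)
        {E | ∀ t : T, cycleCount n (t.1.1 + 3) E t.1.2 = j t}) atTop
      (nhds (∏ t : T, poissonPMF ((∏ i, w (t.1.2 i)) / (2 * (t.1.1 + 3))) (j t))) := by
  have hε := (LabelledCycle.tendsto_chenSteinError_event (T := T) hq hw).const_mul 2
  rw [mul_zero] at hε
  simp only [← LabelledCycle.occurrenceSum_event_apply, ← funext_iff]
  refine tendsto_prob_of_isSteinApprox ?_ ?_ ?_ hε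
    (LabelledCycle.tendsto_sum_prob_event hq hw) j
  · filter_upwards [hq] with n hqn
    exact (LabelledCycle.isDissociated_event hqn.2).isSteinApprox
      (isProbVec_prodWeight fun _ => hqn).1 Sigma.fst
  · filter_upwards [hq] with n hqn
    exact (isProbVec_prodWeight fun _ => hqn).2
  · filter_upwards [hq] with n hqn t
    exact sum_nonneg fun α _ => prob_nonneg (isProbVec_prodWeight fun _ => hqn).1 _

end Asymptotics

section LabelSequences

variable [Fintype L]

variable (L) in
/-- The label sequences of lengths between `3` and `m`. -/
def labelSequences (m : ℕ) : Finset (Σ r : ℕ, Fin (r + 3) → L) :=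
  (range (m - 2)).sigma fun _ => univ

theorem forall_labelSequences_iff {m : ℕ} {P : ∀ k, (Fin k → L) → Prop} :
    (∀ t : labelSequences L m, P (t.1.1 + 3) t.1.2) ↔
      ∀ k, 3 ≤ k → k ≤ m → ∀ ℓ : Fin k → L, P k ℓ := by
  simp only [labelSequences, Subtype.forall, mem_sigma, mem_range, mem_univ, and_true,
    Sigma.forall]
  constructor
  · intro h k h3 hkm
    obtain ⟨r, rfl⟩ := Nat.exists_eq_add_of_le' h3
    exact fun ℓ => h r ℓ (by omega)
  · exact fun h r ℓ hr => h (r + 3) (by omega) (by omega) ℓ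

theorem prod_labelSequences (m : ℕ) (f : ∀ k, (Fin k → L) → ℝ) :
    ∏ t : labelSequences L m, f (t.1.1 + 3) t.1.2 =
      ∏ k ∈ Icc 3 m, ∏ ℓ : Fin k → L, f k ℓ := by
  have hshift (g : ℕ → ℝ) : ∏ k ∈ Icc 3 m, g k = ∏ r ∈ range (m - 2), g (r + 3) := by
    rw [← Ico_add_one_right_eq_Icc, Finset.prod_Ico_eq_prod_range]
    simp only [add_comm, Nat.reduceSubDiff]
  rw [hshift, Finset.prod_coe_sort (labelSequences L m) fun t => f (t.1 + 3) t.2, labelSequences,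
    Finset.prod_sigma]

end LabelSequences

theorem cycle_counts_er_general [Fintype L] [DecidableEq L] {q : ℕ → Option L → ℝ} {w : L → ℝ}
    (hq : ∀ᶠ n in atTop, IsProbVec (q n))
    (hw : ∀ x, Tendsto (fun n : ℕ => n * q n (some x)) atTop (nhds (w x)))
    (m : ℕ) (target : (k : ℕ) → (Fin k → L) → ℕ) :
    Tendsto (fun n => prob (prodWeight fun _ : Pairs n => q n)
        {E | ∀ k, 3 ≤ k → k ≤ m → ∀ ℓ : Fin k → L, cycleCount n k E ℓ = target k ℓ}) atTop
      (nhds (∏ k ∈ Icc 3 m, ∏ ℓ : Fin k → L,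
        poissonPMF ((∏ i, w (ℓ i)) / (2 * k)) (target k ℓ))) := by
  simp only [← forall_labelSequences_iff, ← prod_labelSequences m fun k ℓ =>
    poissonPMF ((∏ i, w (ℓ i)) / (2 * k)) (target k ℓ), Nat.cast_add, Nat.cast_ofNat]
  exact tendsto_prob_cycleCount_eq hq hw _ _

theorem eventually_isProbVec_erPairMass [Fintype L] {a b : ℝ} (ha : 0 < a) (hb : 0 < b)
    {μ ν : L → ℝ} (hμ : IsProbVec μ) (hν : IsProbVec ν) :
    ∀ᶠ n in atTop, IsProbVec (erPairMass n a b μ ν) := by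
  filter_upwards [eventually_ge_atTop ⌈a + b⌉₊] with n hn
  have hab : a + b ≤ 2 * n := by linarith [Nat.ceil_le.1 hn]
  refine ⟨fun o => ?_, ?_⟩
  · cases o with
    | none => exact sub_nonneg.2 (div_le_one_of_le₀ hab (by positivity))
    | some x =>
      have hμx := hμ.1 x
      have hνx := hν.1 x
      simp only [erPairMass]
      positivity
  · have hlabels : ∑ x, (a * μ x + b * ν x) = a + b := by
      rw [Finset.sum_add_distrib, ← Finset.mul_sum, ← Finset.mul_sum, hμ.2, hν.2, mul_one, mul_one]
    simp only [Fintype.sum_option, erPairMass]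
    rw [← Finset.mul_sum, ← Finset.sum_div, hlabels, div_self (by positivity)]
    ring

theorem tendsto_nat_mul_erPairMass {a b : ℝ} (hab : a + b ≠ 0) (μ ν : L → ℝ) (x : L) :
    Tendsto (fun n : ℕ => n * erPairMass n a b μ ν (some x)) atTop
      (nhds ((a * μ x + b * ν x) / 2)) := by
  refine tendsto_const_nhds.congr' ?_
  filter_upwards [eventually_ne_atTop 0] with n hn
  simp only [erPairMass]
  field_simp

theorem lamER_eq_prod_div [Fintype L] (a b : ℝ) (μ ν : L → ℝ) {k : ℕ} (ℓ : Fin k → L) :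
    lamER a b μ ν ℓ = (∏ i, (a * μ (ℓ i) + b * ν (ℓ i)) / 2) / (2 * k) := by
  rw [lamER, Finset.prod_div_distrib, Finset.prod_const, card_univ, Fintype.card_fin, pow_succ]
  ring

/-- **Lemma (Cycle counts under the labeled Erdős–Rényi model, Lemma 2, first part).**
For any fixed `m ≥ 3`, the cycle counts `{X_n([ℓ]_k) : [ℓ]_k ∈ 𝓛^k, 3 ≤ k ≤ m}`
converge jointly in distribution under `ℙ'_n` to independent Poisson random variables
with means `λ([ℓ]_k)`; since the variables are ℕ-valued, this is expressed as pointwise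
convergence of the joint probability mass function. -/
theorem cycle_counts_er
    {L : Type*} [Fintype L] [DecidableEq L] (a b : ℝ) (ha : 0 < a) (hb : 0 < b)
    (μ ν : L → ℝ) (hμ : IsProbVec μ) (hν : IsProbVec ν)
    (m : ℕ) (hm : 3 ≤ m) (target : (k : ℕ) → (Fin k → L) → ℕ) :
    Filter.Tendsto (fun n : ℕ =>
      erProb n a b μ ν
        {E | ∀ (k : ℕ), 3 ≤ k → k ≤ m → ∀ ℓ : Fin k → L,
          cycleCount n k E ℓ = target k ℓ})
      Filter.atTop
      (nhds (∏ k ∈ Finset.Icc 3 m, ∏ ℓ : Fin k → L,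
        poissonPMF (lamER a b μ ν ℓ) (target k ℓ))) := by
  simp only [lamER_eq_prod_div]
  exact cycle_counts_er_general (eventually_isProbVec_erPairMass ha hb hμ hν)
    (tendsto_nat_mul_erPairMass (add_pos ha hb).ne' μ ν) m target

end LSBM
end
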